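/- arXiv:1807.03332 — 6 statements merged into one kernel-verified Lean document; each statement's English description precedes it below -/
import Mathlib

section
/- Let d ≥ 3 be a prime, ω = exp(2πi/d), and let λ_n be the canonical phases: λ_0 = 1 and λ_n = ε_d^{−1} (n/d)^{−1} exp(−πi·g(n,d)/(24d)) for n ∈ {1,…,d−1}. Define B_k = ω^{k(k+1)} X Z^k, and for n ∈ {1,…,d−1} and j ∈ {0,…,d−1} define C_j^{(n)} = (λ_n/√d) ∑_{k=0}^{d−1} ω^{njk} B_k^n. Then the power relation C_j^{(n)} = [C_j^{(1)}]^n holds for all n ∈ {1,…,d−1} and all j ∈ {0,…,d−1}. -/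
/-!
Identify the index set of `ℂ^d` with `ℤ/d` and let `ψ` be the additive character
`x ↦ exp(2πix/d)`. A matrix `e_b ↦ φ(b) e_{b+n}` is a weighted shift (`wshift`), and products,
powers, scalar multiples and sums of weighted shifts are again weighted shifts with explicit weights.
Each `B_k` is a weighted shift by `1`, so `B_k^n` and `C_j^{(n)}` are weighted shifts by `n`. The
weight of `C_j^{(n)}` is a complete quadratic Gauss sum `∑_k ψ(n(k² + 2kv))` with `v` affine in the
position `x`; completing the square turns it into `(n/d) ε_d √d ψ(-nv²)`, and the factor
`√d` is cancelled by the normalisation (`C_eq`), `(n/d) ε_d` by the canonical phase `λ_n`. What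
remains of the power relation is an identity of phases: a sum of squares over `l < n` in the exponent
of `ψ` on the side of `[C_j^{(1)}]^n`, compensated by the ratio of `exp(-πi g(n,d)/(24d))` and
`exp(-πi g(1,d)/(24d))^n` (`phase_eq`). That comes down to the congruence
`g(n,d) ≡ n g(1,d) + (n³ - n)(1 - d²) (mod 48d)` (`gph_congr`), where `(1 - d²)/8` is an integer
representing `1/8` modulo `d`.

The evaluation of the Gauss sum for `n = 1`, including its sign (`gauss_eval`), is obtained
analytically. In the functional equation of the Jacobi theta function at `τ = 2/d + it`, both sides
have an asymptotic expansion as `t → 0⁺` whose leading coefficients are finite Gauss sums of lengths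
`d` and `2`; comparing them gives the Landsberg–Schaar relation (`landsberg_schaar`). The passage to
general `n` by the factor `(n/d)` is the standard scaling property of the Gauss sum of the quadratic
character (`gauss_sq_mul`).
-/

open Matrix

noncomputable section

/-- `ε_d = 1` if `d ≡ 1 (mod 4)` and `ε_d = i` if `d ≡ 3 (mod 4)`. -/
def epsd (d : ℕ) : ℂ := if d % 4 = 1 then 1 else Complex.I

open scoped Classical in
/-- The Legendre symbol `(a/d)` for a prime `d`. -/
def legSym (d : ℕ) (a : ℤ) : ℤ :=
  if (a : ZMod d) = 0 then 0 else if IsSquare (a : ZMod d) then 1 else -1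

/-- The function `g(n,d)` fixing the canonical phases. -/
def gph (n d : ℕ) : ℤ :=
  if n % 2 = 0 then
    (if ((n + d + 1) / 2) % 2 = 0 then
        (n : ℤ) * ((n : ℤ) ^ 2 - (d : ℤ) * ((d : ℤ) + 6) + 3)
      else (n : ℤ) * ((n : ℤ) ^ 2 - (d : ℤ) * ((d : ℤ) - 6) + 3))
  else if n % 4 = 1 then
    (n : ℤ) * ((n : ℤ) ^ 2 + 3) + 2 * (d : ℤ) ^ 2 * (-5 * (n : ℤ) + 3)
  else (n : ℤ) * ((n : ℤ) ^ 2 + 3) + 2 * (d : ℤ) ^ 2 * ((n : ℤ) + 3)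

/-- The `d`-dimensional Heisenberg-Weyl shift matrix `X`, `X e_j = e_{j+1 mod d}`. -/
def Xmat (d : ℕ) : Matrix (Fin d) (Fin d) ℂ :=
  Matrix.of fun i j => if (i : ℕ) = ((j : ℕ) + 1) % d then 1 else 0

/-- The `d`-dimensional Heisenberg-Weyl clock matrix `Z`, `Z e_j = ω^j e_j`. -/
def Zmat (d : ℕ) (ω : ℂ) : Matrix (Fin d) (Fin d) ℂ :=
  Matrix.diagonal fun j => ω ^ (j : ℕ)

/-! ### The Landsberg–Schaar relation from the Jacobi theta function -/

section

open Complex Filter Topology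

/-- For real `x`, `θ(x, τ) → 1` as `Im τ → ∞`: only the constant term of the series survives, by
dominated convergence. -/
theorem theta_tendsto {α : Type*} {l : Filter α} [l.IsCountablyGenerated] (x : ℝ) (τ : α → ℂ)
    (h : Tendsto (fun a => (τ a).im) l atTop) :
    Tendsto (fun a => jacobiTheta₂ x (τ a)) l (𝓝 1) := by
  have key : Tendsto (fun a => ∑' n : ℤ, jacobiTheta₂_term n x (τ a)) l
      (𝓝 (∑' n : ℤ, if n = 0 then 1 else 0)) := by
    refine tendsto_tsum_of_dominated_convergence
      (bound := fun n : ℤ => Real.exp (-Real.pi * (1 * (n:ℝ) ^ 2 - 2 * 0 * |n|))) ?_ ?_ ?_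
    · simpa using summable_pow_mul_jacobiTheta₂_term_bound 0 (T := 1) one_pos 0
    · intro n
      split_ifs with hn
      · subst hn
        simpa [jacobiTheta₂_term] using tendsto_const_nhds
      · rw [tendsto_zero_iff_norm_tendsto_zero]
        simp only [norm_jacobiTheta₂_term, ofReal_im, mul_zero, sub_zero]
        refine Real.tendsto_exp_atBot.comp ?_
        refine h.const_mul_atTop_of_neg ?_
        have : (0:ℝ) < (n:ℝ)^2 := by positivity
        nlinarith [Real.pi_pos]
    · filter_upwards [h.eventually_ge_atTop 1] with a ha n
      exact norm_jacobiTheta₂_term_le one_pos (by simp) ha n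
  simpa [jacobiTheta₂] using key

theorem tsum_int_residues (N : ℕ) [NeZero N] (f : ℤ → ℂ) (hf : Summable f) :
    ∑' n, f n = ∑ r : Fin N, ∑' m : ℤ, f (m * N + r) := by
  rw [← (Int.divModEquiv N).symm.tsum_eq f, ← (Equiv.prodComm _ _).tsum_eq]
  have hs : Summable (fun c : Fin N × ℤ => f ((Int.divModEquiv N).symm (Equiv.prodComm _ _ c))) :=
    (Equiv.prodComm _ _).summable_iff.2 ((Int.divModEquiv N).symm.summable_iff.2 hf)
  rw [hs.tsum_prod, tsum_fintype]
  simp [Int.divModEquiv]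

/-- A Gaussian sum with bounded `N`-periodic coefficients, split into residue classes modulo `N` and
transformed by the functional equation of the theta function. As `Re (1/δ) → ∞` the theta values on
the right tend to `1`, so the sum over `r` tends to the sum of the coefficients over one period. -/
theorem tsum_periodic_gauss (N : ℕ) [NeZero N] (c : ℤ → ℂ) (hc : ∀ m r : ℤ, c (m * N + r) = c r)
    (hc1 : ∀ n, ‖c n‖ ≤ 1)
    (δ : ℂ) (hδ : 0 < δ.re) :
    ∑' n : ℤ, c n * cexp (-Real.pi * δ * n ^ 2) =
      1 / (N ^ 2 * δ) ^ (1 / 2 : ℂ) *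
        ∑ r : Fin N, c r * jacobiTheta₂ ((r / N : ℝ) : ℂ) (I / (N ^ 2 * δ)) := by
  have hN : (N : ℂ) ≠ 0 := NeZero.ne _
  have hδ0 : δ ≠ 0 := by rintro rfl; simp at hδ
  rw [tsum_int_residues N, Finset.mul_sum]
  · refine Finset.sum_congr rfl fun r _ => ?_
    have h1 : ∀ m : ℤ, c (m * N + r) * cexp (-Real.pi * δ * ((m * N + (r : ℕ) : ℤ) : ℂ) ^ 2)
        = c r * cexp (-Real.pi * δ * r ^ 2) *
          jacobiTheta₂_term m (I * δ * N * r) (I * N ^ 2 * δ) := by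
      intro m
      rw [hc, jacobiTheta₂_term, mul_assoc (c r), ← Complex.exp_add]
      congr 2
      push_cast
      linear_combination (-2 * (Real.pi : ℂ) * m * δ * N * r - Real.pi * m ^ 2 * N ^ 2 * δ) * I_sq
    simp_rw [h1]
    rw [tsum_mul_left, ← jacobiTheta₂, jacobiTheta₂_functional_equation]
    have e1 : -I * (I * N ^ 2 * δ) = N ^ 2 * δ := by linear_combination (-(N : ℂ) ^ 2 * δ) * I_sq
    have e2 : I * δ * N * r / (I * N ^ 2 * δ) = ((r / N : ℝ) : ℂ) := by
      push_cast; field_simp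
    have e3 : -1 / (I * N ^ 2 * δ) = I / (N ^ 2 * δ) := by
      field_simp; simp
    have e4 : -Real.pi * I * (I * δ * N * r) ^ 2 / (I * N ^ 2 * δ) = -(-Real.pi * δ * r ^ 2) := by
      field_simp; simp
    rw [e1, e2, e3, e4, Complex.exp_neg]
    field_simp
  · refine Summable.of_norm_bounded (g := fun n : ℤ => ‖jacobiTheta₂_term n 0 (I * δ)‖) ?_ ?_
    · exact ((summable_jacobiTheta₂_term_iff _ _).2 (by simpa using hδ)).norm
    · intro n
      rw [norm_mul]
      refine (mul_le_of_le_one_left (norm_nonneg _) (hc1 n)).trans (le_of_eq ?_)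
      rw [jacobiTheta₂_term]
      congr 2
      linear_combination (-(Real.pi : ℂ) * n ^ 2 * δ) * I_sq

/-- The principal power is multiplicative when one factor is a positive real number. -/
theorem real_mul_cpow {t : ℝ} (ht : 0 < t) {w : ℂ} (hw : w ≠ 0) (s : ℂ) :
    ((t : ℂ) * w) ^ s = (t : ℂ) ^ s * w ^ s := by
  have ht0 : (t : ℂ) ≠ 0 := by exact_mod_cast ht.ne'
  rw [cpow_def_of_ne_zero (mul_ne_zero ht0 hw), cpow_def_of_ne_zero ht0, cpow_def_of_ne_zero hw,
    log_ofReal_mul ht hw, ← Complex.exp_add, add_mul, ofReal_log ht.le]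

/-- The Landsberg–Schaar relation `∑_{r<p} exp(2πir²/p) = √(ip/2) (1 + exp(-πip/2))`, with the
constant in the form in which the functional equation of the theta function produces it. -/
theorem landsberg_schaar (p : ℕ) [NeZero p] :
    ∑ r : Fin p, cexp (2 * Real.pi * I * ((r : ℕ) : ℂ) ^ 2 / p) =
      p / ((2 / p) * -I) ^ (1 / 2 : ℂ) * (1 / (p ^ 2 : ℂ) ^ (1 / 2 : ℂ)) *
        (1 + cexp (-(Real.pi * I * p / 2))) := by
  have hp : (p : ℂ) ≠ 0 := NeZero.ne _
  have hp0 : (0 : ℝ) < p := by exact_mod_cast NeZero.pos p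
  have hpp : (0 : ℝ) < p ^ 2 := by positivity
  let τ : ℝ → ℂ := fun t => 2 / p + t * I
  have hτre : ∀ t, (τ t).re = 2 / p := by
    intro t; simp [τ, ← ofReal_natCast, ← ofReal_ofNat, -ofReal_div]
  have hτim : ∀ t, (τ t).im = t := by
    intro t; simp [τ, ← ofReal_natCast, ← ofReal_ofNat, -ofReal_div]
  have hτ0 : ∀ t, τ t ≠ 0 := by
    intro t h
    have := hτre t
    rw [h] at this
    rw [zero_re] at this
    have h2 : (0 : ℝ) < 2 / p := by positivity
    linarith
  have hτlim : Tendsto τ (𝓝[>] 0) (𝓝 (2 / p)) := by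
    have : Continuous τ := by fun_prop
    have := this.tendsto 0
    simp only [τ, ofReal_zero, zero_mul, add_zero] at this
    exact this.mono_left nhdsWithin_le_nhds
  -- `F t` and `H t` are the finite theta combinations on the two sides of the functional equation at
  -- `τ t`, after the transformation of `tsum_periodic_gauss` with periods `p` and `2`; for the
  -- second one uses `-1 / τ = -p/2 + iδ` with `δ = p t / (2 τ)`.
  let F : ℝ → ℂ := fun t => ∑ r : Fin p, cexp (2 * Real.pi * I * (((r : ℕ) : ℤ) : ℂ) ^ 2 / p) *
    jacobiTheta₂ (((r : ℕ) / p : ℝ) : ℂ) (I / (p ^ 2 * t))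
  let H : ℝ → ℂ := fun t => ∑ r : Fin 2, cexp (-(Real.pi * I * p / 2 * (((r : ℕ) : ℤ) : ℂ) ^ 2)) *
    jacobiTheta₂ (((r : ℕ) / (2 : ℕ) : ℝ) : ℂ) (I / ((2 : ℕ) ^ 2 * (p * t / (2 * τ t))))
  have him : Tendsto (fun t : ℝ => 1 / (p ^ 2 * t)) (𝓝[>] 0) atTop := by
    have := tendsto_inv_nhdsGT_zero (𝕜 := ℝ)
    refine (this.const_mul_atTop (inv_pos.2 hpp)).congr fun t => ?_
    field_simp
  have hF : Tendsto F (𝓝[>] 0) (𝓝 (∑ r : Fin p, cexp (2 * Real.pi * I * ((r : ℕ) : ℂ) ^ 2 / p))) := by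
    refine tendsto_finsetSum _ fun r _ => ?_
    have := theta_tendsto (l := 𝓝[>] (0 : ℝ)) ((r : ℕ) / p) (fun t : ℝ => I / (p ^ 2 * t)) (by
      refine him.congr fun t => ?_
      have : I / ((p : ℂ) ^ 2 * t) = ((1 / (p ^ 2 * t) : ℝ) : ℂ) * I := by
        push_cast; ring
      rw [this, im_ofReal_mul, I_im, mul_one])
    simpa using this.const_mul (cexp (2 * Real.pi * I * ((r : ℕ) : ℂ) ^ 2 / p))
  have hH : Tendsto H (𝓝[>] 0) (𝓝 (1 + cexp (-(Real.pi * I * p / 2)))) := by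
    have : (1 + cexp (-(Real.pi * I * p / 2))) =
        ∑ r : Fin 2, cexp (-(Real.pi * I * p / 2 * (((r : ℕ) : ℤ) : ℂ) ^ 2)) := by
      simp [Fin.sum_univ_two]
    rw [this]
    refine tendsto_finsetSum _ fun r _ => ?_
    have := theta_tendsto (l := 𝓝[>] (0 : ℝ)) ((r : ℕ) / (2 : ℕ))
      (fun t : ℝ => I / ((2 : ℕ) ^ 2 * (p * t / (2 * τ t)))) (by
      refine him.congr' ?_
      filter_upwards [self_mem_nhdsWithin] with t ht
      have ht : (t : ℂ) ≠ 0 := by exact_mod_cast (ne_of_gt ht)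
      have : I / (((2 : ℕ) : ℂ) ^ 2 * (p * t / (2 * τ t))) = ((1 / (2 * p * t) : ℝ) : ℂ) * (I * τ t) := by
        have := hτ0 t
        push_cast; field_simp; try norm_num
      rw [this, im_ofReal_mul, I_mul_im, hτre]
      have : (p:ℝ) ≠ 0 := hp0.ne'
      try field_simp)
    simpa using this.const_mul (cexp (-(Real.pi * I * p / 2 * (((r : ℕ) : ℤ) : ℂ) ^ 2)))
  -- The factors `t ^ (1/2)` from the two applications of `tsum_periodic_gauss` cancel here.
  have key : ∀ t : ℝ, 0 < t → F t = p / (-I * τ t) ^ (1 / 2 : ℂ) *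
      (1 / (2 * p / τ t) ^ (1 / 2 : ℂ)) * H t := by
    intro t ht
    have ht0 : (t : ℂ) ≠ 0 := by exact_mod_cast ht.ne'
    have hτt := hτ0 t
    have hδ : 0 < ((p : ℂ) * t / (2 * τ t)).re := by
      have : (p : ℂ) * t / (2 * τ t) = ((p * t / 2 : ℝ) : ℂ) * (τ t)⁻¹ := by
        push_cast; field_simp
      rw [this, re_ofReal_mul, inv_re, hτre]
      have := normSq_pos.2 hτt
      positivity
    have A := tsum_periodic_gauss p (fun n => cexp (2 * Real.pi * I * (n : ℂ) ^ 2 / p))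
      (fun m r => by
        rw [Complex.exp_eq_exp_iff_exists_int]
        refine ⟨m ^ 2 * p + 2 * m * r, ?_⟩
        push_cast; field_simp; ring)
      (fun n => by
        rw [show 2 * Real.pi * I * (n : ℂ) ^ 2 / p = ((2 * Real.pi * n ^ 2 / p : ℝ) : ℂ) * I by
          push_cast; ring, norm_exp_ofReal_mul_I]) t (by simpa using ht)
    have B := tsum_periodic_gauss 2 (fun n => cexp (-(Real.pi * I * p / 2 * (n : ℂ) ^ 2)))
      (fun m r => by
        rw [Complex.exp_eq_exp_iff_exists_int]
        refine ⟨-(p * (m ^ 2 + m * r)), ?_⟩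
        push_cast; field_simp; ring)
      (fun n => by
        rw [show -(Real.pi * I * p / 2 * (n : ℂ) ^ 2) = ((-(Real.pi * p / 2 * n ^ 2) : ℝ) : ℂ) * I by
          push_cast; ring, norm_exp_ofReal_mul_I]) _ hδ
    have A' : jacobiTheta₂ 0 (τ t) =
        ∑' n : ℤ, cexp (2 * Real.pi * I * (n : ℂ) ^ 2 / p) * cexp (-Real.pi * t * n ^ 2) := by
      refine tsum_congr fun n => ?_
      rw [jacobiTheta₂_term, ← Complex.exp_add]
      congr 1
      simp only [τ]
      linear_combination ((Real.pi : ℂ) * n ^ 2 * t) * I_sq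
    have B' : jacobiTheta₂ 0 (-1 / τ t) = ∑' n : ℤ, cexp (-(Real.pi * I * p / 2 * (n : ℂ) ^ 2)) *
        cexp (-Real.pi * (p * t / (2 * τ t)) * n ^ 2) := by
      refine tsum_congr fun n => ?_
      rw [jacobiTheta₂_term, ← Complex.exp_add]
      congr 1
      have : (p : ℂ) * t / (2 * τ t) = -I * (-1 / τ t + p / 2) := by
        field_simp
        simp only [τ]
        field_simp
        linear_combination ((p : ℂ) * t) * I_sq
      rw [this]
      ring
    have h1 : ((p : ℂ) ^ 2 * t) ^ (1 / 2 : ℂ) = (t : ℂ) ^ (1 / 2 : ℂ) * p := by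
      rw [mul_comm, real_mul_cpow ht (pow_ne_zero _ hp)]
      congr 1
      rw [one_div, show (2 : ℂ) = ((2 : ℕ) : ℂ) by norm_num, ← ofReal_natCast,
        ← ofReal_pow, ← ofReal_natCast, ← ofReal_inv, ← ofReal_cpow hpp.le]
      rw [Real.pow_rpow_inv_natCast hp0.le two_ne_zero]
    have h2 : (((2 : ℕ) : ℂ) ^ 2 * (p * t / (2 * τ t))) ^ (1 / 2 : ℂ) =
        (t : ℂ) ^ (1 / 2 : ℂ) * (2 * p / τ t) ^ (1 / 2 : ℂ) := by
      rw [← real_mul_cpow ht (div_ne_zero (by simpa using hp) hτt)]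
      congr 1
      push_cast; field_simp; try norm_num
    have E := jacobiTheta₂_functional_equation 0 (τ t)
    rw [zero_div, A', B', A, B, h1, h2] at E
    change 1 / ((t : ℂ) ^ (1 / 2 : ℂ) * p) * F t = 1 / (-I * τ t) ^ (1 / 2 : ℂ) * _ * (_ * H t) at E
    have ht2 : (t : ℂ) ^ (1 / 2 : ℂ) ≠ 0 := by simp [cpow_eq_zero_iff, ht0]
    have : F t = (t : ℂ) ^ (1 / 2 : ℂ) * p * (1 / ((t : ℂ) ^ (1 / 2 : ℂ) * p) * F t) := by
      field_simp
    rw [this, E]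
    simp
    field_simp
  refine tendsto_nhds_unique hF ?_
  have hφ : ContinuousAt (fun w : ℂ => p / (-I * w) ^ (1 / 2 : ℂ) * (1 / (2 * p / w) ^ (1 / 2 : ℂ)))
      (2 / p) := by
    have e1 : 2 * (p : ℂ) / (2 / p) = ((p ^ 2 : ℝ) : ℂ) := by push_cast; field_simp
    have h2p : (2 / p : ℂ) ≠ 0 := div_ne_zero two_ne_zero hp
    refine (continuousAt_const.div (ContinuousAt.cpow (by fun_prop) continuousAt_const ?_) ?_).mul
      (continuousAt_const.div (ContinuousAt.cpow (continuousAt_const.div continuousAt_id h2p)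
        continuousAt_const ?_) ?_)
    · right
      have : -I * (2 / (p : ℂ)) = ((2 / p : ℝ) : ℂ) * -I := by push_cast; ring
      rw [this, im_ofReal_mul]
      simp [hp0.ne']
    · simp [cpow_eq_zero_iff]
      simpa using hp
    · simp only [e1]
      exact ofReal_mem_slitPlane.2 hpp
    · simp only [e1]
      simp [cpow_eq_zero_iff, hp]
  have := (hφ.tendsto.comp hτlim).mul hH
  refine (this.congr' (f₂ := F) ?_).trans (le_of_eq ?_)
  · filter_upwards [self_mem_nhdsWithin] with t ht
    exact (key t ht).symm
  · congr 4
    · ring_nf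
    · field_simp

end

/-! ### Quadratic Gauss sums -/

open Complex in
/-- Gauss: the quadratic Gauss sum of odd length `d` equals `ε_d √d`. -/
theorem gauss_eval (d : ℕ) [NeZero d] (hd : d % 2 = 1) :
    ∑ r : Fin d, cexp (2 * Real.pi * I * ((r : ℕ) : ℂ) ^ 2 / d) = epsd d * (Real.sqrt d : ℂ) := by
  have hd0 : (0 : ℝ) < d := by exact_mod_cast NeZero.pos d
  have hdc : (d : ℂ) ≠ 0 := NeZero.ne _
  rw [landsberg_schaar]
  have h1 : ((2 / d) * -I : ℂ) ^ (1 / 2 : ℂ) = (Real.sqrt d : ℂ)⁻¹ * (1 - I) := by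
    have : (2 / d : ℂ) = ((2 / d : ℝ) : ℂ) := by push_cast; rfl
    rw [this, real_mul_cpow (by positivity) (by simp), cpow_def_of_ne_zero (x := -I) (by simp),
      log_neg_I, show (1 / 2 : ℂ) = ((1 / 2 : ℝ) : ℂ) by push_cast; rfl,
      ← ofReal_cpow (by positivity), ← Real.sqrt_eq_rpow, Real.sqrt_div zero_le_two,
      show (-(Real.pi / 2) * I * ((1 / 2 : ℝ) : ℂ) : ℂ) = ((-(Real.pi / 4) : ℝ) : ℂ) * I by
        push_cast; ring, exp_mul_I, ← ofReal_cos, ← ofReal_sin, Real.cos_neg, Real.sin_neg,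
      Real.cos_pi_div_four, Real.sin_pi_div_four]
    have h2 : (Real.sqrt 2 : ℂ) * Real.sqrt 2 = 2 := by
      rw [← ofReal_mul, Real.mul_self_sqrt zero_le_two]; norm_num
    push_cast
    rw [div_eq_mul_inv]
    linear_combination ((Real.sqrt d : ℂ)⁻¹ * (1 - I) / 2) * h2
  have h2 : ((d : ℂ) ^ 2) ^ (1 / 2 : ℂ) = d := by
    rw [← ofReal_natCast, ← ofReal_pow, show (1 / 2 : ℂ) = ((1 / 2 : ℝ) : ℂ) by push_cast; rfl,
      ← ofReal_cpow (by positivity), ← Real.sqrt_eq_rpow, Real.sqrt_sq hd0.le]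
  have h3 : cexp (-(Real.pi * I * d / 2)) = if d % 4 = 1 then -I else I := by
    have e1 : cexp (-(Real.pi / 2 * I)) = -I := by
      rw [Complex.exp_neg, exp_pi_div_two_mul_I, inv_I]
    have : d % 4 = 1 ∨ d % 4 = 3 := by omega
    rcases this with h | h
    · rw [if_pos h]
      obtain ⟨m, hm⟩ : ∃ m, d = 4 * m + 1 := ⟨d / 4, by omega⟩
      refine Eq.trans (Complex.exp_eq_exp_iff_exists_int.2 ⟨-m, ?_⟩) e1
      rw [hm]; push_cast; ring
    · rw [if_neg (by omega)]
      obtain ⟨m, hm⟩ : ∃ m, d = 4 * m + 3 := ⟨d / 4, by omega⟩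
      refine Eq.trans (Complex.exp_eq_exp_iff_exists_int.2 ⟨-m - 1, ?_⟩) exp_pi_div_two_mul_I
      rw [hm]; push_cast; ring
  have h4 : (Real.sqrt d : ℂ) ≠ 0 := by
    exact_mod_cast (Real.sqrt_pos.2 hd0).ne'
  have h5 : (1 - I : ℂ) ≠ 0 := by
    intro h; simpa using congrArg re h
  rw [h1, h2, h3, epsd]
  split_ifs
  · field_simp; ring
  · field_simp; linear_combination I_sq

open Complex in
/-- `∑_k ψ(nk²) = (n/d) ∑_k ψ(k²)`: counting square roots writes either sum as a Gauss sum of the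
quadratic character, for which the scaling rule is known. -/
theorem gauss_sq_mul (d : ℕ) [Fact d.Prime] (hd : d ≠ 2) (n : ZMod d) (hn : n ≠ 0) :
    ∑ k : ZMod d, ZMod.stdAddChar (n * k ^ 2) =
      (quadraticChar (ZMod d) n : ℂ) * ∑ k : ZMod d, (ZMod.stdAddChar (k ^ 2) : ℂ) := by
  have hchar : ringChar (ZMod d) ≠ 2 := by rwa [ZMod.ringChar_zmod_n]
  let χ : MulChar (ZMod d) ℂ := (quadraticChar (ZMod d)).ringHomComp (Int.castRingHom ℂ)
  have key : ∀ m : ZMod d, m ≠ 0 → ∑ k : ZMod d, (ZMod.stdAddChar (m * k ^ 2) : ℂ) =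
      gaussSum χ (ZMod.stdAddChar.mulShift m) := by
    intro m hm
    have h0 : ∑ a : ZMod d, (ZMod.stdAddChar (m * a) : ℂ) = 0 := by
      have := AddChar.sum_mulShift m (ZMod.isPrimitive_stdAddChar d)
      simpa [hm, mul_comm] using this
    have : ∀ a : ZMod d, ∑ k ∈ Finset.univ.filter (fun k : ZMod d => k ^ 2 = a),
        (ZMod.stdAddChar (m * k ^ 2) : ℂ) = (χ a + 1) * ZMod.stdAddChar (m * a) := by
      intro a
      rw [Finset.sum_congr rfl (g := fun _ => (ZMod.stdAddChar (m * a) : ℂ))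
        (fun k hk => by rw [(Finset.mem_filter.1 hk).2])]
      rw [Finset.sum_const, nsmul_eq_mul]
      congr 1
      have := quadraticChar_card_sqrts hchar a
      have h2 : (((Finset.univ.filter (fun k : ZMod d => k ^ 2 = a)).card : ℤ) : ℂ) = χ a + 1 := by
        simp only [χ, MulChar.ringHomComp_apply, eq_intCast]
        rw [← Int.cast_one (R := ℂ), ← Int.cast_add, ← this]
        congr 3
        ext; simp
      simpa using h2
    rw [← Finset.sum_fiberwise (s := Finset.univ) (g := fun k : ZMod d => k ^ 2)]
    simp_rw [this, add_mul, one_mul]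
    rw [Finset.sum_add_distrib, h0, add_zero]
    rfl
  have h1 := key 1 one_ne_zero
  simp only [one_mul] at h1
  rw [key n hn, h1]
  have h2 := gaussSum_mulShift χ (ZMod.stdAddChar.mulShift 1) (Units.mk0 n hn)
  rw [Units.val_mk0, AddChar.mulShift_mulShift, one_mul] at h2
  have h3 : χ n * χ n = 1 := by
    simp only [χ, MulChar.ringHomComp_apply, eq_intCast]
    rw [← Int.cast_mul, ← sq, quadraticChar_sq_one hn, Int.cast_one]
  rw [← h2, ← mul_assoc]
  change _ = χ n * χ n * _
  rw [h3, one_mul]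

theorem legSym_eq (d : ℕ) [Fact d.Prime] (n : ℕ) :
    legSym d n = quadraticChar (ZMod d) (n : ZMod d) := by
  classical
  rw [quadraticChar_apply, quadraticCharFun, legSym]
  simp

theorem fin_sum_eq (d : ℕ) [NeZero d] {M : Type*} [AddCommMonoid M] (F : ZMod d → M) :
    ∑ k : Fin d, F ((k : ℕ) : ZMod d) = ∑ x : ZMod d, F x := by
  obtain _ | d := d
  · exact absurd rfl (NeZero.ne 0)
  · refine Finset.sum_congr rfl fun k _ => ?_
    congr 1
    exact Fin.cast_val_eq_self k

open Complex in
/-- The Gauss sum with a linear term, by completing the square: `k² + 2kv = (k+v)² - v²`. -/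
theorem gauss_complete (d : ℕ) [Fact d.Prime] (hd : d ≠ 2) (n : ℕ) (hn : (n : ZMod d) ≠ 0)
    (v : ZMod d) :
    ∑ k : Fin d, (ZMod.stdAddChar ((n : ZMod d) *
        (((k : ℕ) : ZMod d) ^ 2 + 2 * ((k : ℕ) : ZMod d) * v)) : ℂ) =
      legSym d n * epsd d * (Real.sqrt d : ℂ) * ZMod.stdAddChar (-((n : ZMod d) * v ^ 2)) := by
  rw [fin_sum_eq d (fun k => (ZMod.stdAddChar ((n : ZMod d) * (k ^ 2 + 2 * k * v)) : ℂ))]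
  have h1 : ∀ k : ZMod d, (ZMod.stdAddChar ((n : ZMod d) * (k ^ 2 + 2 * k * v)) : ℂ) =
      ZMod.stdAddChar ((n : ZMod d) * (k + v) ^ 2) * ZMod.stdAddChar (-((n : ZMod d) * v ^ 2)) := by
    intro k
    rw [← AddChar.map_add_eq_mul]
    congr 1; ring
  simp_rw [h1]
  have h2 : ∑ k : ZMod d, (ZMod.stdAddChar ((n : ZMod d) * (k + v) ^ 2) : ℂ) =
      ∑ k : ZMod d, (ZMod.stdAddChar ((n : ZMod d) * k ^ 2) : ℂ) :=
    Equiv.sum_comp (Equiv.addRight v) (fun k => (ZMod.stdAddChar ((n : ZMod d) * k ^ 2) : ℂ))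
  rw [← Finset.sum_mul, h2, gauss_sq_mul d hd n hn, legSym_eq,
    mul_assoc (_ : ℂ) (epsd d), ← gauss_eval d ((Fact.out : d.Prime).eq_two_or_odd.resolve_left hd),
    ← fin_sum_eq d (fun k => (ZMod.stdAddChar (k ^ 2) : ℂ))]
  congr 2
  refine Finset.sum_congr rfl fun k _ => ?_
  have := ZMod.stdAddChar_coe (N := d) (((k : ℕ) : ℤ) ^ 2)
  push_cast at this
  rw [this]

/-! ### Weighted shifts -/

/-- The weighted shift `e_b ↦ φ(b) e_{b+n}` on `ℂ^d`, with indices read modulo `d`. -/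
def wshift (d : ℕ) (n : ZMod d) (φ : ZMod d → ℂ) : Matrix (Fin d) (Fin d) ℂ :=
  Matrix.of fun a b => if ((a : ℕ) : ZMod d) = ((b : ℕ) : ZMod d) + n then φ ((b : ℕ) : ZMod d)
    else 0

theorem wshift_mul (d : ℕ) [NeZero d] (n m : ZMod d) (φ χ : ZMod d → ℂ) :
    wshift d n φ * wshift d m χ = wshift d (n + m) (fun x => φ (x + m) * χ x) := by
  ext a b
  simp only [wshift, Matrix.mul_apply, Matrix.of_apply]
  rw [fin_sum_eq d (fun c => (if ((a : ℕ) : ZMod d) = c + n then φ c else 0) *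
    (if c = ((b : ℕ) : ZMod d) + m then χ ((b : ℕ) : ZMod d) else 0))]
  simp only [mul_ite, mul_zero, Finset.sum_ite_eq', Finset.mem_univ, if_true,
    ite_mul, zero_mul, add_assoc, add_comm m n]

theorem natCast_fin_inj (d : ℕ) (a b : Fin d) :
    ((a : ℕ) : ZMod d) = ((b : ℕ) : ZMod d) ↔ a = b := by
  rw [ZMod.natCast_eq_natCast_iff', Nat.mod_eq_of_lt a.2, Nat.mod_eq_of_lt b.2, Fin.ext_iff]

/-- The `n`-th power of a shift by `1`: the weight is the product of the `n` weights met on the way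
from `x` to `x + n`. -/
theorem wshift_pow (d : ℕ) [NeZero d] (φ : ZMod d → ℂ) (n : ℕ) :
    wshift d 1 φ ^ n = wshift d n (fun x => ∏ l ∈ Finset.range n, φ (x + l)) := by
  induction n with
  | zero =>
    ext a b
    simp [wshift, Matrix.one_apply, natCast_fin_inj]
  | succ n ih =>
    rw [pow_succ', ih, wshift_mul]
    simp only [Finset.prod_range_succ, Nat.cast_succ, add_comm (1 : ZMod d)]
    simp only [mul_comm]

theorem smul_wshift (d : ℕ) (n : ZMod d) (c : ℂ) (φ : ZMod d → ℂ) :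
    c • wshift d n φ = wshift d n (fun x => c * φ x) := by
  ext a b
  simp [wshift]

theorem sum_wshift (d : ℕ) {ι : Type*} (s : Finset ι) (n : ZMod d) (φ : ι → ZMod d → ℂ) :
    ∑ i ∈ s, wshift d n (φ i) = wshift d n (fun x => ∑ i ∈ s, φ i x) := by
  ext a b
  simp only [wshift, Matrix.sum_apply, Matrix.of_apply]
  split_ifs <;> simp

theorem omega_pow (d : ℕ) [NeZero d] (m : ℕ) :
    Complex.exp (2 * Real.pi * Complex.I / d) ^ m = ZMod.stdAddChar (m : ZMod d) := by
  have := ZMod.stdAddChar_coe (N := d) (m : ℤ)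
  rw [← Complex.exp_nat_mul]
  push_cast at this
  rw [this]
  congr 1; ring

theorem XZ_eq (d : ℕ) [NeZero d] (k : ℕ) :
    Xmat d * Zmat d (Complex.exp (2 * Real.pi * Complex.I / d)) ^ k =
      wshift d 1 (fun x => ZMod.stdAddChar ((k : ZMod d) * x)) := by
  ext a b
  rw [Zmat, Matrix.diagonal_pow, Matrix.mul_diagonal]
  simp only [Xmat, wshift, Matrix.of_apply, Pi.pow_apply]
  rw [← pow_mul, omega_pow]
  have : ((a : ℕ) = ((b : ℕ) + 1) % d) ↔ (((a : ℕ) : ZMod d) = ((b : ℕ) : ZMod d) + 1) := by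
    rw [← Nat.cast_succ, ZMod.natCast_eq_natCast_iff', Nat.mod_eq_of_lt a.2]
  simp only [this, ite_mul, one_mul, zero_mul]
  push_cast
  simp only [mul_comm]

theorem prod_stdAddChar (d : ℕ) [NeZero d] (n : ℕ) (f : ℕ → ZMod d) :
    ∏ l ∈ Finset.range n, (ZMod.stdAddChar (f l) : ℂ) =
      ZMod.stdAddChar (∑ l ∈ Finset.range n, f l) := by
  induction n with
  | zero => simp
  | succ n ih => rw [Finset.prod_range_succ, Finset.sum_range_succ, ih, AddChar.map_add_eq_mul]

/-! ### Power sums -/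

theorem two_sum (n : ℕ) : (2 : ℤ) * ∑ l ∈ Finset.range n, (l : ℤ) = n * (n - 1) := by
  induction n with
  | zero => simp
  | succ n ih => rw [Finset.sum_range_succ, mul_add, ih]; push_cast; ring

/-- `(n³ - n)/6` as a binomial coefficient, which makes its reduction modulo `d` meaningful even when
`d = 3`. -/
theorem six_choose (n : ℕ) : (6 : ℤ) * (n + 1).choose 3 = n ^ 3 - n := by
  induction n with
  | zero => simp [Nat.choose]
  | succ n ih =>
    have h2 : (2 : ℤ) * (n + 1).choose 2 = n * (n + 1) := by
      have h := Finset.sum_range_id_mul_two (n + 1)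
      rw [Finset.sum_range_id, ← Nat.choose_two_right, Nat.add_sub_cancel] at h
      zify at h
      linarith
    rw [Nat.choose_succ_succ' (n + 1) 2]
    push_cast
    linear_combination ih + 3 * h2

/-- The sum of the squares below `n` in terms of `(n³ - n)/6`, avoiding the denominator `3`, which is
not invertible modulo `d = 3`. -/
theorem four_sum_sq (n : ℕ) :
    (4 : ℤ) * ∑ l ∈ Finset.range n, (l : ℤ) ^ 2 = n * (n - 1) ^ 2 + 2 * (n + 1).choose 3 := by
  have h : (12 : ℤ) * ∑ l ∈ Finset.range n, (l : ℤ) ^ 2 = 2 * (n * (n - 1) * (2 * n - 1)) := by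
    induction n with
    | zero => simp
    | succ n ih => rw [Finset.sum_range_succ, mul_add, ih]; push_cast; ring
  have := six_choose n
  have : (3 : ℤ) * (4 * ∑ l ∈ Finset.range n, (l : ℤ) ^ 2) =
      3 * (n * (n - 1) ^ 2 + 2 * (n + 1).choose 3) := by linear_combination h - this
  linarith

/-! ### The operators `C_j^{(n)}` as weighted shifts -/

/-- `C_j^{(n)}` as a weighted shift by `n`. Here `w` is the inverse of `8` modulo `d`, so that
`2w = 1/4` and the square being completed is that of `k + (2(x+j) + n + 1)/4`. -/
theorem C_eq (d : ℕ) [Fact d.Prime] (hd : d ≠ 2) (w : ZMod d) (hw : 8 * w = 1)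
    (n : ℕ) (hn : (n : ZMod d) ≠ 0) (lam : ℂ) (j : Fin d) :
    (lam / (Real.sqrt d : ℂ)) • ∑ k : Fin d,
      Complex.exp (2 * Real.pi * Complex.I / d) ^ (n * (j : ℕ) * (k : ℕ)) •
        (Complex.exp (2 * Real.pi * Complex.I / d) ^ ((k : ℕ) * ((k : ℕ) + 1)) •
          (Xmat d * Zmat d (Complex.exp (2 * Real.pi * Complex.I / d)) ^ (k : ℕ))) ^ n =
    wshift d n (fun x => lam * (legSym d n * epsd d) *
      ZMod.stdAddChar (-((n : ZMod d) * (2 * w * (2 * (x + ((j : ℕ) : ZMod d)) + (n : ZMod d) + 1)) ^ 2))) := by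
  have hs : (Real.sqrt d : ℂ) ≠ 0 := by
    have : 0 < d := NeZero.pos d
    have : (0 : ℝ) < d := by exact_mod_cast this
    exact_mod_cast (Real.sqrt_pos.2 this).ne'
  simp only [XZ_eq, smul_wshift, wshift_pow, sum_wshift, omega_pow]
  congr 1
  funext x
  simp only [← AddChar.map_add_eq_mul, prod_stdAddChar]
  have h : ∀ k : Fin d, ((n * (j : ℕ) * (k : ℕ) : ℕ) : ZMod d) + ∑ l ∈ Finset.range n,
      ((((k : ℕ) * ((k : ℕ) + 1) : ℕ) : ZMod d) + ((k : ℕ) : ZMod d) * (x + l)) =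
      (n : ZMod d) * (((k : ℕ) : ZMod d) ^ 2 + 2 * ((k : ℕ) : ZMod d) *
        (2 * w * (2 * (x + ((j : ℕ) : ZMod d)) + (n : ZMod d) + 1))) := by
    intro k
    have hT : (2 : ZMod d) * ∑ l ∈ Finset.range n, (l : ZMod d) = n * (n - 1) := by
      have := congrArg (Int.cast : ℤ → ZMod d) (two_sum n)
      push_cast at this
      exact this
    simp only [mul_add, Finset.sum_add_distrib, ← Finset.mul_sum, Finset.sum_const,
      Finset.card_range, nsmul_eq_mul]
    push_cast
    generalize ∑ l ∈ Finset.range n, (l : ZMod d) = T at *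
    linear_combination ((k : ℕ) : ZMod d) * 4 * w * hT +
      (-(n : ZMod d) * k * (x + j) - n * k - (k : ℕ) * T) * hw
  simp only [h]
  rw [gauss_complete d hd n hn]
  field_simp

/-! ### The canonical phases -/

/-- The congruence modulo `48d` behind the choice of the canonical phases. In each case of the
definition of `g` it reduces to a polynomial divisibility, by `3` after writing `n = 4a + 1` or
`n = 4a + 3`, and by `12` for even `n = 2m`, where the case fixes `d + n` modulo `4`. -/
theorem gph_congr (n d : ℕ) (hd : d % 2 = 1) :
    (48 * d : ℤ) ∣ gph n d - n * gph 1 d - (n ^ 3 - n) * (1 - d ^ 2) := by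
  have h1 : gph 1 d = 4 - 4 * (d : ℤ) ^ 2 := by simp [gph]; ring
  rw [h1, gph]
  split_ifs with h2 h3 h4
  · obtain ⟨m, hm⟩ : ∃ m : ℤ, (n : ℤ) = 2 * m := ⟨n / 2, by omega⟩
    obtain ⟨e, he⟩ : ∃ e : ℤ, (d : ℤ) = 3 - 2 * m + 4 * e := ⟨(d - 3 + 2 * m) / 4, by omega⟩
    obtain ⟨K, hK⟩ : (12 : ℤ) ∣ 2 * (3 - 2 * m + 4 * e) * m ^ 3 + (3 - 2 * m + 4 * e) * m - 3 * m := by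
      refine (ZMod.intCast_zmod_eq_zero_iff_dvd _ 12).1 ?_
      push_cast
      generalize (m : ZMod 12) = m
      generalize (e : ZMod 12) = e
      revert m e
      decide
    refine ⟨K, ?_⟩
    rw [hm, he]
    linear_combination 4 * (3 - 2 * m + 4 * e) * hK
  · obtain ⟨m, hm⟩ : ∃ m : ℤ, (n : ℤ) = 2 * m := ⟨n / 2, by omega⟩
    obtain ⟨e, he⟩ : ∃ e : ℤ, (d : ℤ) = 1 - 2 * m + 4 * e := ⟨(d - 1 + 2 * m) / 4, by omega⟩
    obtain ⟨K, hK⟩ : (12 : ℤ) ∣ 2 * (1 - 2 * m + 4 * e) * m ^ 3 + (1 - 2 * m + 4 * e) * m + 3 * m := by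
      refine (ZMod.intCast_zmod_eq_zero_iff_dvd _ 12).1 ?_
      push_cast
      generalize (m : ZMod 12) = m
      generalize (e : ZMod 12) = e
      revert m e
      decide
    refine ⟨K, ?_⟩
    rw [hm, he]
    linear_combination 4 * (1 - 2 * m + 4 * e) * hK
  · obtain ⟨a, ha⟩ : ∃ a : ℤ, (n : ℤ) = 4 * a + 1 := ⟨n / 4, by omega⟩
    obtain ⟨K, hK⟩ : (3 : ℤ) ∣ 4 * a ^ 3 + 3 * a ^ 2 - a := by
      refine (ZMod.intCast_zmod_eq_zero_iff_dvd _ 3).1 ?_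
      push_cast
      generalize (a : ZMod 3) = a
      revert a
      decide
    refine ⟨d * K, ?_⟩
    rw [ha]
    linear_combination 16 * (d : ℤ) ^ 2 * hK
  · obtain ⟨a, ha⟩ : ∃ a : ℤ, (n : ℤ) = 4 * a + 3 := ⟨n / 4, by omega⟩
    obtain ⟨K, hK⟩ : (3 : ℤ) ∣ 4 * a ^ 3 + 9 * a ^ 2 + 8 * a + 3 := by
      refine (ZMod.intCast_zmod_eq_zero_iff_dvd _ 3).1 ?_
      push_cast
      generalize (a : ZMod 3) = a
      revert a
      decide
    refine ⟨d * K, ?_⟩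
    rw [ha]
    linear_combination 16 * (d : ℤ) ^ 2 * hK

/-- The canonical phases satisfy `μ_n = μ_1^n ψ(-(n³ - n)/48)` for `μ_n = exp(-πi g(n,d)/(24d))`,
where `h = (1 - d²)/8` represents `1/8` modulo `d`. -/
theorem phase_eq (n d : ℕ) [NeZero d] (hd : d % 2 = 1) (h : ℤ) (hh : 8 * h = 1 - d ^ 2) :
    Complex.exp (-(Real.pi * Complex.I * (gph n d : ℂ)) / (24 * d)) =
      Complex.exp (-(Real.pi * Complex.I * (gph 1 d : ℂ)) / (24 * d)) ^ n *
        ZMod.stdAddChar (-((h : ZMod d) * (((n + 1).choose 3 : ℕ) : ZMod d))) := by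
  obtain ⟨K, hK⟩ := gph_congr n d hd
  have hd0 : (d : ℂ) ≠ 0 := NeZero.ne _
  have e := ZMod.stdAddChar_coe (N := d) (-(h * ((n + 1).choose 3 : ℕ)))
  push_cast at e
  rw [e, ← Complex.exp_nat_mul, ← Complex.exp_add, Complex.exp_eq_exp_iff_exists_int]
  refine ⟨-K, ?_⟩
  have hK' := congrArg (Int.cast : ℤ → ℂ) hK
  have hC := congrArg (Int.cast : ℤ → ℂ) (six_choose n)
  have hh' := congrArg (Int.cast : ℤ → ℂ) hh
  push_cast at hK' hC hh' ⊢
  field_simp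
  linear_combination (-(1 : ℂ)) * hK' + (8 * h : ℂ) * hC + ((n : ℂ) ^ 3 - n) * hh'

/-! ### The power relation -/

/-- with the canonical phases `λ_n`, the operators
`C_j^{(n)} = (λ_n/√d) ∑_k ω^{njk} B_k^n` built from `B_k = ω^{k(k+1)} X Z^k`
satisfy the power relation `C_j^{(n)} = [C_j^{(1)}]^n` for `n ∈ {1,…,d-1}`. -/
theorem canonical_power_relation
    (d : ℕ) (hd : d.Prime) (hd3 : 3 ≤ d)
    (ω : ℂ) (hω : ω = Complex.exp (2 * Real.pi * Complex.I / d))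
    (lam : ℕ → ℂ) (hlam0 : lam 0 = 1)
    (hlam : ∀ n : ℕ, 1 ≤ n → n ≤ d - 1 →
      lam n = (epsd d)⁻¹ * ((legSym d n : ℂ))⁻¹ *
        Complex.exp (-(Real.pi * Complex.I * (gph n d : ℂ)) / (24 * d)))
    (B : Fin d → Matrix (Fin d) (Fin d) ℂ)
    (hB : ∀ k : Fin d,
      B k = ω ^ ((k : ℕ) * ((k : ℕ) + 1)) • (Xmat d * (Zmat d ω) ^ (k : ℕ)))
    (C : ℕ → Fin d → Matrix (Fin d) (Fin d) ℂ)
    (hC : ∀ n : ℕ, 1 ≤ n → n ≤ d - 1 → ∀ j : Fin d,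
      C n j = (lam n / (Real.sqrt d : ℂ)) •
        ∑ k : Fin d, ω ^ (n * (j : ℕ) * (k : ℕ)) • (B k) ^ n) :
    ∀ n : ℕ, 1 ≤ n → n ≤ d - 1 → ∀ j : Fin d, C n j = (C 1 j) ^ n := by
  have : Fact d.Prime := ⟨hd⟩
  subst hω
  have hd2 : d ≠ 2 := by omega
  have hodd : d % 2 = 1 := hd.eq_two_or_odd.resolve_left hd2
  -- `(1 - d²) / 8` is an explicit integer representing the inverse of `8` modulo `d`.
  obtain ⟨h, hh⟩ : ∃ h : ℤ, 8 * h = 1 - (d : ℤ) ^ 2 := by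
    obtain ⟨m, hm⟩ : ∃ m : ℤ, (d : ℤ) = 2 * m + 1 := ⟨d / 2, by omega⟩
    obtain ⟨r, hr⟩ := Int.even_mul_succ_self m
    exact ⟨-r, by rw [hm]; linear_combination 4 * hr⟩
  have hw : 8 * (h : ZMod d) = 1 := by
    have := congrArg (Int.cast : ℤ → ZMod d) hh
    push_cast at this
    simpa using this
  have heps : epsd d ≠ 0 := by
    rw [epsd]; split_ifs <;> simp
  -- `λ_n` removes the Legendre symbol and `ε_d` from the Gauss sum.
  have hform : ∀ n : ℕ, 1 ≤ n → n ≤ d - 1 → ∀ j : Fin d, C n j =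
      wshift d n (fun x => Complex.exp (-(Real.pi * Complex.I * (gph n d : ℂ)) / (24 * d)) *
        ZMod.stdAddChar
          (-((n : ZMod d) * (2 * (h : ZMod d) * (2 * (x + ((j : ℕ) : ZMod d)) + (n : ZMod d) + 1)) ^ 2))) := by
    intro n hn1 hn2 j
    have hn : (n : ZMod d) ≠ 0 := by
      rw [Ne, ZMod.natCast_eq_zero_iff]
      exact Nat.not_dvd_of_pos_of_lt hn1 (by omega)
    have hleg : (legSym d n : ℂ) ≠ 0 := by
      rw [legSym_eq]
      exact_mod_cast quadraticChar_eq_zero_iff.not.2 hn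
    rw [hC n hn1 hn2]
    simp only [hB]
    rw [C_eq d hd2 h hw n hn, hlam n hn1 hn2]
    congr 1
    funext x
    field_simp
  intro n hn1 hn2 j
  rw [hform n hn1 hn2, hform 1 le_rfl (by omega), Nat.cast_one, wshift_pow]
  congr 1
  funext x
  rw [Finset.prod_mul_distrib, Finset.prod_const, Finset.card_range, prod_stdAddChar,
    phase_eq n d hodd h hh, mul_assoc, ← AddChar.map_add_eq_mul]
  congr 2
  have hT : (2 : ZMod d) * ∑ l ∈ Finset.range n, (l : ZMod d) = n * (n - 1) := by
    have := congrArg (Int.cast : ℤ → ZMod d) (two_sum n)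
    push_cast at this
    exact this
  have hQ : (4 : ZMod d) * ∑ l ∈ Finset.range n, (l : ZMod d) ^ 2 =
      n * (n - 1) ^ 2 + 2 * ((n + 1).choose 3 : ℕ) := by
    have := congrArg (Int.cast : ℤ → ZMod d) (four_sum_sq n)
    push_cast at this
    exact this
  -- The exponents on the side of `(C 1 j) ^ n`, expanded in the power sums over `l < n`.
  have hS : ∑ l ∈ Finset.range n,
      -((1 : ZMod d) * (2 * (h : ZMod d) * (2 * (x + l + ((j : ℕ) : ZMod d)) + 1 + 1)) ^ 2) =
      -(16 * (h : ZMod d) ^ 2 * (n * (x + ((j : ℕ) : ZMod d) + 1) ^ 2 +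
        2 * (x + ((j : ℕ) : ZMod d) + 1) * ∑ l ∈ Finset.range n, (l : ZMod d) +
        ∑ l ∈ Finset.range n, (l : ZMod d) ^ 2)) := by
    have : (n : ZMod d) * (x + ((j : ℕ) : ZMod d) + 1) ^ 2 =
      ∑ l ∈ Finset.range n, (x + ((j : ℕ) : ZMod d) + 1) ^ 2 := by simp
    rw [this, Finset.mul_sum, ← Finset.sum_add_distrib, ← Finset.sum_add_distrib, Finset.mul_sum,
      ← Finset.sum_neg_distrib]
    refine Finset.sum_congr rfl fun l _ => ?_
    ring
  rw [hS]
  generalize ∑ l ∈ Finset.range n, (l : ZMod d) = T at *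
  generalize ∑ l ∈ Finset.range n, (l : ZMod d) ^ 2 = Q at *
  generalize (((n + 1).choose 3 : ℕ) : ZMod d) = c at *
  linear_combination (16 * (h : ZMod d) ^ 2 * (x + ((j : ℕ) : ZMod d) + 1)) * hT +
    (4 * (h : ZMod d) ^ 2) * hQ + (h : ZMod d) * c * hw

end
end

section
/- Let d ≥ 2 be an integer and let ρ be a density matrix on ℂ^{D_A} ⊗ ℂ^{D_B} whose reduced states ρ_A and ρ_B (partial traces) are both full rank. Let A be a unitary D_A×D_A matrix with A^d = 𝟙, and let C^{(1)}, …, C^{(d−1)} be D_B×D_B matrices such that for all n ∈ {1,…,d−1} the relations (A^{d−n} ⊗ 𝟙) ρ = (𝟙 ⊗ C^{(n)}) ρ and (A^{n} ⊗ 𝟙) ρ = (𝟙 ⊗ [C^{(n)}]†) ρ hold. Then C^{(1)} is unitary, [C^{(1)}]^d = 𝟙, and C^{(t)} = [C^{(1)}]^t for all t ∈ {1,…,d−1}. -/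
/-!
Write `X ~ Y` for `(X ⊗ 𝟙) ρ = (𝟙 ⊗ Y) ρ`. Operators on different tensor factors commute, so
this relation is multiplicative with the order reversed on the second factor
(`transfers_mul`). It also determines `Y` from `X`: tracing out the first factor turns
`(𝟙 ⊗ Y) ρ` into `Y ρ_B`, and `ρ_B` is invertible because it has full rank
(`transfers_unique`).

Since `A^(d-1) ~ C 1`, multiplicativity gives `A^((d-1)t) ~ (C 1)^t`. As `A^d = 𝟙`, the left-hand
side is `A^(d-t)` for `1 ≤ t < d`, and `𝟙` for `t = d`; uniqueness yields `C t = (C 1)^t` and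
`(C 1)^d = 𝟙`. Finally `A ~ (C 1)†` together with `A^(d-1) ~ C 1` gives
`𝟙 = A A^(d-1) ~ (C 1) (C 1)†`, hence `C 1` is unitary.
-/

open Matrix Kronecker ComplexOrder

/-- `Transfers ρ X Y` says that `X` on the first factor acts on `ρ` as `Y` on the second:
`(X ⊗ 𝟙) ρ = (𝟙 ⊗ Y) ρ`. -/
def Transfers {DA DB : ℕ} (ρ : Matrix (Fin DA × Fin DB) (Fin DA × Fin DB) ℂ)
    (X : Matrix (Fin DA) (Fin DA) ℂ) (Y : Matrix (Fin DB) (Fin DB) ℂ) : Prop :=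
  (X ⊗ₖ (1 : Matrix (Fin DB) (Fin DB) ℂ)) * ρ = ((1 : Matrix (Fin DA) (Fin DA) ℂ) ⊗ₖ Y) * ρ

section Transfers

variable {DA DB : ℕ} {ρ : Matrix (Fin DA × Fin DB) (Fin DA × Fin DB) ℂ}
  {X X' : Matrix (Fin DA) (Fin DA) ℂ} {Y Y' : Matrix (Fin DB) (Fin DB) ℂ}

lemma transfers_one : Transfers ρ 1 1 := rfl

lemma transfers_mul (h : Transfers ρ X Y) (h' : Transfers ρ X' Y') :
    Transfers ρ (X' * X) (Y * Y') := by
  unfold Transfers at *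
  calc ((X' * X) ⊗ₖ (1 : Matrix (Fin DB) (Fin DB) ℂ)) * ρ
      = (X' ⊗ₖ (1 : Matrix (Fin DB) (Fin DB) ℂ)) *
          ((X ⊗ₖ (1 : Matrix (Fin DB) (Fin DB) ℂ)) * ρ) := by
        rw [← Matrix.mul_assoc, ← Matrix.mul_kronecker_mul, Matrix.mul_one]
    _ = ((1 : Matrix (Fin DA) (Fin DA) ℂ) ⊗ₖ Y) *
          ((X' ⊗ₖ (1 : Matrix (Fin DB) (Fin DB) ℂ)) * ρ) := by
        rw [h, ← Matrix.mul_assoc, ← Matrix.mul_assoc, ← Matrix.mul_kronecker_mul,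
          ← Matrix.mul_kronecker_mul]
        simp only [Matrix.mul_one, Matrix.one_mul]
    _ = ((1 : Matrix (Fin DA) (Fin DA) ℂ) ⊗ₖ (Y * Y')) * ρ := by
        rw [h', ← Matrix.mul_assoc, ← Matrix.mul_kronecker_mul, Matrix.mul_one]

lemma transfers_pow (h : Transfers ρ X Y) (t : ℕ) : Transfers ρ (X ^ t) (Y ^ t) := by
  induction t with
  | zero => simpa using transfers_one
  | succ t ih =>
    rw [pow_succ' X, pow_succ Y]
    exact transfers_mul ih h

/-- The partial trace over the first factor of `(𝟙 ⊗ Y) ρ` is `Y ρ_B`. -/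
lemma mul_reduced_apply (Y : Matrix (Fin DB) (Fin DB) ℂ) (j j' : Fin DB) :
    (Y * Matrix.of fun j j' : Fin DB => ∑ i : Fin DA, ρ (i, j) (i, j')) j j' =
      ∑ i : Fin DA, (((1 : Matrix (Fin DA) (Fin DA) ℂ) ⊗ₖ Y) * ρ) (i, j) (i, j') := by
  simp only [Matrix.mul_apply, Matrix.of_apply, Fintype.sum_prod_type, Matrix.kroneckerMap_apply,
    Matrix.one_apply, ite_mul, one_mul, zero_mul, Finset.mul_sum]
  rw [Finset.sum_comm]
  refine Finset.sum_congr rfl fun i _ => ?_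
  rw [Finset.sum_eq_single i]
  · simp
  · intro b _ hb
    simp [hb.symm]
  · simp

lemma transfers_unique
    (hrankB :
      (Matrix.of fun j j' : Fin DB => ∑ i : Fin DA, ρ (i, j) (i, j')).rank = DB)
    (h : Transfers ρ X Y) (h' : Transfers ρ X Y') : Y = Y' := by
  have hunit : IsUnit (Matrix.of fun j j' : Fin DB => ∑ i : Fin DA, ρ (i, j) (i, j')) := by
    rw [← Matrix.mulVec_surjective_iff_isUnit]
    refine (LinearMap.range_eq_top (f := Matrix.mulVecLin _)).mp ?_
    apply Submodule.eq_top_of_finrank_eq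
    rw [Module.finrank_fin_fun]
    exact hrankB
  apply hunit.mul_right_cancel
  ext j j'
  rw [mul_reduced_apply, mul_reduced_apply, ← h, ← h']

end Transfers

/-- if a bipartite density matrix `ρ` has full-rank reduced
states, `A` is a unitary with `A^d = 𝟙`, and the operators `C^{(n)}` satisfy
`(A^{d-n} ⊗ 𝟙) ρ = (𝟙 ⊗ C^{(n)}) ρ` and `(A^n ⊗ 𝟙) ρ = (𝟙 ⊗ C^{(n)†}) ρ` for
all `n ∈ {1,…,d-1}`, then `C^{(1)}` is unitary, `[C^{(1)}]^d = 𝟙`, and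
`C^{(t)} = [C^{(1)}]^t` for all `t ∈ {1,…,d-1}`. -/
theorem optimal_observables_power_relation
    (d : ℕ) (hd : 2 ≤ d) (DA DB : ℕ)
    (ρ : Matrix (Fin DA × Fin DB) (Fin DA × Fin DB) ℂ)
    (hρ : ρ.PosSemidef) (hρtr : ρ.trace = 1)
    (hrankA :
      (Matrix.of fun i i' : Fin DA => ∑ j : Fin DB, ρ (i, j) (i', j)).rank = DA)
    (hrankB :
      (Matrix.of fun j j' : Fin DB => ∑ i : Fin DA, ρ (i, j) (i, j')).rank = DB)
    (A : Matrix (Fin DA) (Fin DA) ℂ)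
    (hAU : A ∈ Matrix.unitaryGroup (Fin DA) ℂ) (hAd : A ^ d = 1)
    (C : ℕ → Matrix (Fin DB) (Fin DB) ℂ)
    (h1 : ∀ n : ℕ, 1 ≤ n → n ≤ d - 1 →
      ((A ^ (d - n)) ⊗ₖ (1 : Matrix (Fin DB) (Fin DB) ℂ)) * ρ =
        ((1 : Matrix (Fin DA) (Fin DA) ℂ) ⊗ₖ C n) * ρ)
    (h2 : ∀ n : ℕ, 1 ≤ n → n ≤ d - 1 →
      ((A ^ n) ⊗ₖ (1 : Matrix (Fin DB) (Fin DB) ℂ)) * ρ =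
        ((1 : Matrix (Fin DA) (Fin DA) ℂ) ⊗ₖ (C n)ᴴ) * ρ) :
    C 1 ∈ Matrix.unitaryGroup (Fin DB) ℂ ∧ (C 1) ^ d = 1 ∧
      ∀ t : ℕ, 1 ≤ t → t ≤ d - 1 → C t = (C 1) ^ t := by
  have hC : ∀ t : ℕ, Transfers ρ ((A ^ (d - 1)) ^ t) (C 1 ^ t) :=
    transfers_pow (h1 1 le_rfl (by omega))
  refine ⟨?_, ?_, ?_⟩
  · rw [Matrix.mem_unitaryGroup_iff, Matrix.star_eq_conjTranspose]
    have h := transfers_mul (h1 1 le_rfl (by omega)) (h2 1 le_rfl (by omega))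
    rw [← pow_add, show 1 + (d - 1) = d by omega, hAd] at h
    exact transfers_unique hrankB h transfers_one
  · have h := hC d
    rw [← pow_mul, mul_comm, pow_mul, hAd, one_pow] at h
    exact transfers_unique hrankB h transfers_one
  · intro t ht htd
    -- Both `A^(d-t)` and `A^((d-1)t)` are inverse to `A^t`.
    have hA : (A ^ (d - 1)) ^ t = A ^ (d - t) := by
      have hunit : IsUnit (A ^ t) := (IsUnit.of_pow_eq_one hAd (by omega)).pow t
      apply hunit.mul_right_cancel
      rw [← (Commute.pow_left rfl (d - 1)).mul_pow, ← pow_succ, ← pow_add, show d - 1 + 1 = d by omega,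
        show d - t + t = d by omega, hAd, one_pow]
    have h := hC t
    rw [hA] at h
    exact transfers_unique hrankB (h1 t ht htd) h
end

section
/- Let d ≥ 2, ω = exp(2πi/d), let {F_a}_{a=0}^{d−1} be positive semidefinite D×D matrices with ∑_a F_a = 𝟙, and set A = ∑_{a=0}^{d−1} ω^a F_a. Let ρ be a full-rank density matrix on ℂ^D such that tr(A† A ρ) = 1. Then the measurement is projective: F_a F_b = δ_{ab} F_a for all a, b ∈ {0,…,d−1}. -/
/-!
Put `z a = ω ^ a`, so `|z a| = 1`. Expanding, and using `∑ F a = 1`, gives the variance identity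
`∑ a, (z a - A)ᴴ F a (z a - A) = 1 - Aᴴ A`, a sum of positive semidefinite matrices. Pairing it
with `ρ` gives a sum of nonnegative numbers equal to `1 - tr (Aᴴ A ρ) = 0`, so every pairing
vanishes. Since `ρ` has full rank, `F a (z a - A) = 0`, that is, `F a A = z a F a`
(`mul_eq_zero_of_trace_eq_zero`). The identity then reads `Aᴴ A = 1`, so `A` is unitary, and taking
adjoints gives `A F a = z a F a`. Thus `z a F a F b = F a A F b = z b F a F b`, and `z a ≠ z b` for
`a ≠ b` forces `F a F b = 0`; multiplying `∑ F b = 1` by `F a` gives `F a F a = F a`.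
-/

open Matrix ComplexOrder

open scoped MatrixOrder Matrix.Norms.L2Operator in
lemma posSemidef_exists_factor {n : ℕ} {M : Matrix (Fin n) (Fin n) ℂ} (hM : M.PosSemidef) :
    ∃ G : Matrix (Fin n) (Fin n) ℂ, M = Gᴴ * G :=
  CStarAlgebra.nonneg_iff_eq_star_mul_self.mp hM.nonneg

lemma eq_zero_of_mul_full_rank {n : ℕ} {M ρ : Matrix (Fin n) (Fin n) ℂ} (hρ : ρ.rank = n)
    (h : M * ρ = 0) : M = 0 := by
  have h1 := Matrix.rank_add_rank_le_card_of_mul_eq_zero h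
  rw [hρ, Fintype.card_fin] at h1
  have h2 : M.rank = 0 := by omega
  rw [Matrix.rank, Submodule.finrank_eq_zero, LinearMap.range_eq_bot] at h2
  exact Matrix.mulVec_injective (funext fun v => by simpa using LinearMap.congr_fun h2 v)

/-- With `F = Gᴴ G` and `ρ = Cᴴ C`, the trace is the squared Frobenius norm of `G B Cᴴ`. -/
lemma trace_eq_factor {n : ℕ} (B G C : Matrix (Fin n) (Fin n) ℂ) :
    (Bᴴ * (Gᴴ * G) * B * (Cᴴ * C)).trace = ((G * B * Cᴴ)ᴴ * (G * B * Cᴴ)).trace := by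
  rw [← Matrix.mul_assoc _ Cᴴ C, Matrix.trace_mul_comm _ C]
  simp only [Matrix.conjTranspose_mul, Matrix.conjTranspose_conjTranspose, Matrix.mul_assoc]

lemma trace_sandwich_nonneg {n : ℕ} {F ρ : Matrix (Fin n) (Fin n) ℂ} (hF : F.PosSemidef)
    (hρ : ρ.PosSemidef) (B : Matrix (Fin n) (Fin n) ℂ) : 0 ≤ (Bᴴ * F * B * ρ).trace := by
  obtain ⟨G, rfl⟩ := posSemidef_exists_factor hF
  obtain ⟨C, rfl⟩ := posSemidef_exists_factor hρ
  rw [trace_eq_factor]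
  exact (Matrix.posSemidef_conjTranspose_mul_self _).trace_nonneg

/-- A full-rank state is faithful: it detects any nonzero `F * B`. -/
lemma mul_eq_zero_of_trace_eq_zero {n : ℕ} {F ρ B : Matrix (Fin n) (Fin n) ℂ}
    (hF : F.PosSemidef) (hρ : ρ.PosSemidef) (hrank : ρ.rank = n)
    (h : (Bᴴ * F * B * ρ).trace = 0) : F * B = 0 := by
  obtain ⟨G, rfl⟩ := posSemidef_exists_factor hF
  obtain ⟨C, rfl⟩ := posSemidef_exists_factor hρ
  rw [trace_eq_factor, Matrix.trace_conjTranspose_mul_self_eq_zero_iff] at h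
  apply eq_zero_of_mul_full_rank hrank
  calc Gᴴ * G * B * (Cᴴ * C) = Gᴴ * (G * B * Cᴴ) * C := by simp only [Matrix.mul_assoc]
    _ = 0 := by rw [h]; simp

/-- The variance identity `∑ (z a - A)ᴴ F a (z a - A) = 1 - Aᴴ A` for unimodular outcomes `z`. -/
lemma sum_sandwich {d n : ℕ} {z : Fin d → ℂ} (hz : ∀ a, star (z a) * z a = 1)
    {F : Fin d → Matrix (Fin n) (Fin n) ℂ} (hF : ∀ a, (F a)ᴴ = F a) (hsum : ∑ a, F a = 1)
    {A : Matrix (Fin n) (Fin n) ℂ} (hA : A = ∑ a, z a • F a) :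
    ∑ a, (z a • (1 : Matrix (Fin n) (Fin n) ℂ) - A)ᴴ * F a * (z a • 1 - A) = 1 - Aᴴ * A := by
  have hAH : Aᴴ = ∑ a, star (z a) • F a := by
    rw [hA, Matrix.conjTranspose_sum]
    simp [Matrix.conjTranspose_smul, hF]
  have key : ∀ a, (z a • (1 : Matrix (Fin n) (Fin n) ℂ) - A)ᴴ * F a * (z a • 1 - A)
      = F a - (star (z a) • F a) * A - Aᴴ * (z a • F a) + Aᴴ * F a * A := by
    intro a
    have h1 : F a = (star (z a) * z a) • F a := by rw [hz, one_smul]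
    conv_rhs => enter [1, 1, 1]; rw [h1]
    simp only [Matrix.conjTranspose_sub, Matrix.conjTranspose_smul, Matrix.conjTranspose_one,
      Matrix.sub_mul, Matrix.mul_sub, Matrix.smul_mul, Matrix.mul_smul, Matrix.one_mul,
      Matrix.mul_one, smul_sub, smul_smul, mul_comm (z a)]
    abel
  simp only [key, Finset.sum_add_distrib, Finset.sum_sub_distrib, ← Matrix.sum_mul,
    ← Matrix.mul_sum, hsum, ← hA, ← hAH, Matrix.mul_one]
  abel

/-- if a POVM `{F_a}` with `A = ∑_a ω^a F_a` satisfies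
`tr(A† A ρ) = 1` for a full-rank density matrix `ρ`, then the measurement is
projective: `F_a F_b = δ_{ab} F_a`. -/
theorem saturation_implies_projective
    (d : ℕ) (hd : 2 ≤ d) (D : ℕ)
    (ω : ℂ) (hω : ω = Complex.exp (2 * Real.pi * Complex.I / d))
    (F : Fin d → Matrix (Fin D) (Fin D) ℂ)
    (hF : ∀ a, (F a).PosSemidef)
    (hFsum : ∑ a : Fin d, F a = 1)
    (A : Matrix (Fin D) (Fin D) ℂ)
    (hA : A = ∑ a : Fin d, ω ^ (a : ℕ) • F a)
    (ρ : Matrix (Fin D) (Fin D) ℂ)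
    (hρ : ρ.PosSemidef) (hρtr : ρ.trace = 1) (hρrank : ρ.rank = D)
    (htr : (Aᴴ * A * ρ).trace = 1) :
    ∀ a b, F a * F b = if a = b then F a else 0 := by
  have hd0 : d ≠ 0 := by omega
  have hprim : IsPrimitiveRoot ω d := hω ▸ Complex.isPrimitiveRoot_exp d hd0
  have hz : ∀ a : Fin d, star (ω ^ (a : ℕ)) * ω ^ (a : ℕ) = 1 := by
    intro a
    have h1 : ‖ω ^ (a : ℕ)‖ = 1 := by rw [norm_pow, hprim.norm'_eq_one hd0, one_pow]
    rw [Complex.star_def, Complex.conj_mul', h1]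
    norm_num
  have hvar := sum_sandwich hz (fun a => (hF a).1) hFsum hA
  have hsum0 : ∑ a : Fin d, ((ω ^ (a : ℕ) • (1 : Matrix (Fin D) (Fin D) ℂ) - A)ᴴ * F a *
      (ω ^ (a : ℕ) • 1 - A) * ρ).trace = 0 := by
    rw [← Matrix.trace_sum, ← Matrix.sum_mul, hvar, Matrix.sub_mul, Matrix.trace_sub, htr,
      Matrix.one_mul, hρtr, sub_self]
  have hzero : ∀ a : Fin d, F a * (ω ^ (a : ℕ) • 1 - A) = 0 := fun a =>
    mul_eq_zero_of_trace_eq_zero (hF a) hρ hρrank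
      ((Finset.sum_eq_zero_iff_of_nonneg
        fun a _ => trace_sandwich_nonneg (hF a) hρ _).mp hsum0 a (Finset.mem_univ a))
  have hFA : ∀ a : Fin d, F a * A = ω ^ (a : ℕ) • F a := by
    intro a
    have h := hzero a
    rw [Matrix.mul_sub, Matrix.mul_smul, Matrix.mul_one, sub_eq_zero] at h
    exact h.symm
  have hAA : Aᴴ * A = 1 := by
    simp only [Matrix.mul_assoc, hzero, Matrix.mul_zero, Finset.sum_const_zero] at hvar
    exact (sub_eq_zero.mp hvar.symm).symm
  have hAF : ∀ a : Fin d, A * F a = ω ^ (a : ℕ) • F a := by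
    intro a
    have h1 : Aᴴ * F a = star (ω ^ (a : ℕ)) • F a := by
      have h := congrArg Matrix.conjTranspose (hFA a)
      rwa [Matrix.conjTranspose_mul, Matrix.conjTranspose_smul, (hF a).1.eq] at h
    -- In finite dimension an isometry is unitary.
    have h2 : A * Aᴴ = 1 := mul_eq_one_comm.mp hAA
    calc A * F a = ω ^ (a : ℕ) • (A * (star (ω ^ (a : ℕ)) • F a)) := by
          rw [Matrix.mul_smul, smul_smul, mul_comm, hz, one_smul]
      _ = ω ^ (a : ℕ) • F a := by rw [← h1, ← Matrix.mul_assoc, h2, Matrix.one_mul]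
  have horth : ∀ a b : Fin d, a ≠ b → F a * F b = 0 := by
    intro a b hab
    have h : ω ^ (a : ℕ) • (F a * F b) = ω ^ (b : ℕ) • (F a * F b) := by
      rw [← Matrix.smul_mul, ← hFA, Matrix.mul_assoc, hAF, Matrix.mul_smul]
    rw [← sub_eq_zero, ← sub_smul, smul_eq_zero, sub_eq_zero] at h
    exact h.resolve_left fun h' => hab (Fin.ext (hprim.pow_inj a.2 b.2 h'))
  intro a b
  split_ifs with hab
  · subst hab
    have h : F a * ∑ b, F b = F a := by rw [hFsum, Matrix.mul_one]
    rwa [Matrix.mul_sum, Finset.sum_eq_single a (fun b _ hb => horth a b hb.symm)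
      (fun h => absurd (Finset.mem_univ a) h)] at h
  · exact horth a b hab
end

section
/- Let ω = exp(2πi/3) and let B_0, B_1, B_2 be unitary matrices on a finite-dimensional complex Hilbert space satisfying B_k³ = 𝟙 for k ∈ {0,1,2}. Suppose that for every j ∈ {0,1,2} the relation −ω² ∑_{k=0}^{2} ω^{−jk} B_k† = ∑_{k ≠ k'} ω^{j(k+k')} B_k B_{k'} holds (the sum on the right over ordered pairs k ≠ k' in {0,1,2}). Then the anticommutation relations B_2† = −ω(B_0 B_1 + B_1 B_0), B_1† = −ω(B_2 B_0 + B_0 B_2), and B_0† = −ω(B_1 B_2 + B_2 B_1) hold; in particular each anticommutator B_k B_{k'} + B_{k'} B_k with k ≠ k' is unitary. -/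
/-!
The sum over `k ≠ k'` only sees the anticommutators `P = {B₀, B₁}`, `Q = {B₂, B₀}`,
`R = {B₁, B₂}`, with coefficients `ω^j`, `ω^(2j)`, `ω^(3j) = 1`, while on the left `B₂†`, `B₁†`,
`B₀†` carry `ω^(-2j) = ω^j`, `ω^(-j) = ω^(2j)`, `1`. So the three relations say that two
triples have the same discrete Fourier transform over `ℤ/3`, and inverting it
(`dft_three_inversion`) gives `-ω² B₂† = P` and its two analogues; multiply by `-ω`. Unitarity
follows because each anticommutator is the phase `-ω²` times the adjoint of a unitary.
-/

open Matrix

/-- Fourier inversion on `ℤ/3`, where `ω` is a primitive cube root of unity. -/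
lemma dft_three_inversion {ω X Y Z P Q R : ℂ} (hω : ω ^ 2 + ω + 1 = 0)
    (h0 : -ω ^ 2 * (X + Y + Z) = P + Q + R)
    (h1 : -ω ^ 2 * (X + ω ^ 2 * Y + ω * Z) = ω * P + ω ^ 2 * Q + R)
    (h2 : -ω ^ 2 * (X + ω * Y + ω ^ 2 * Z) = ω ^ 2 * P + ω * Q + R) :
    Z = -ω * P ∧ Y = -ω * Q ∧ X = -ω * R := by
  refine ⟨?_, ?_, ?_⟩ <;> grind

lemma cube_root_sum (ω : ℂ) (hω : ω = Complex.exp (2 * Real.pi * Complex.I / 3)) :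
    ω ^ 2 + ω + 1 = 0 := by
  have hp : IsPrimitiveRoot ω 3 := by
    rw [hω]; exact_mod_cast Complex.isPrimitiveRoot_exp 3 (by norm_num)
  have := hp.geom_sum_eq_zero (by norm_num)
  simp only [Finset.sum_range_succ, Finset.sum_range_zero] at this
  linear_combination this

/-- If `U† = -ω A` with `U` unitary and `|ω| = 1` (here in the form `ω ω̄ = 1`),
then `A` is unitary. -/
lemma mem_unitaryGroup_of_conjTranspose_eq {N : ℕ} {ω : ℂ} (hω : star ω * ω = 1)
    {U A : Matrix (Fin N) (Fin N) ℂ} (hU : U ∈ Matrix.unitaryGroup (Fin N) ℂ)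
    (h : Uᴴ = (-ω) • A) : A ∈ Matrix.unitaryGroup (Fin N) ℂ := by
  have hA : A = (-star ω) • Uᴴ := by
    rw [h, smul_smul, neg_mul_neg, hω, one_smul]
  rw [Matrix.mem_unitaryGroup_iff]
  rw [Matrix.mem_unitaryGroup_iff', Matrix.star_eq_conjTranspose] at hU
  rw [hA, Matrix.star_eq_conjTranspose, Matrix.conjTranspose_smul,
    Matrix.conjTranspose_conjTranspose, smul_mul_smul_comm, hU, star_neg, star_star,
    neg_mul_neg, hω, one_smul]

/-- for order-3 unitaries `B₀, B₁, B₂` satisfying the relations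
`−ω² ∑_k ω^{−jk} B_k† = ∑_{k≠k'} ω^{j(k+k')} B_k B_{k'}` for all `j`, the
anticommutation relations `B₂† = −ω{B₀,B₁}`, `B₁† = −ω{B₂,B₀}`,
`B₀† = −ω{B₁,B₂}` hold; in particular every anticommutator `{B_k, B_{k'}}`
with `k ≠ k'` is unitary. -/
theorem qutrit_anticommutation_relations
    (ω : ℂ) (hω : ω = Complex.exp (2 * Real.pi * Complex.I / 3))
    (N : ℕ) (B : Fin 3 → Matrix (Fin N) (Fin N) ℂ)
    (hBU : ∀ k, B k ∈ Matrix.unitaryGroup (Fin N) ℂ)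
    (hB3 : ∀ k, (B k) ^ 3 = 1)
    (hrel : ∀ j : Fin 3,
      (-(ω ^ 2)) • ∑ k : Fin 3, ω ^ (-((j : ℤ) * (k : ℤ))) • (B k)ᴴ =
        ∑ k : Fin 3, ∑ k' : Fin 3,
          if k = k' then 0
          else ω ^ ((j : ℕ) * ((k : ℕ) + (k' : ℕ))) • (B k * B k')) :
    (B 2)ᴴ = (-ω) • (B 0 * B 1 + B 1 * B 0) ∧
    (B 1)ᴴ = (-ω) • (B 2 * B 0 + B 0 * B 2) ∧
    (B 0)ᴴ = (-ω) • (B 1 * B 2 + B 2 * B 1) ∧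
    ∀ k k' : Fin 3, k ≠ k' →
      B k * B k' + B k' * B k ∈ Matrix.unitaryGroup (Fin N) ℂ := by
  have hs := cube_root_sum ω hω
  have h3 : ω ^ 3 = 1 := by linear_combination (ω - 1) * hs
  have hnorm : star ω * ω = 1 := by
    have h1 : ‖ω‖ = 1 := Complex.norm_eq_one_of_pow_eq_one h3 (by norm_num)
    have := Complex.conj_mul' ω
    rw [h1] at this
    simpa using this
  have h4 : ω ^ 4 = ω := by linear_combination ω * h3
  have h6 : ω ^ 6 = 1 := by linear_combination (ω ^ 3 + 1) * h3
  have hinv : ω⁻¹ = ω ^ 2 := inv_eq_of_mul_eq_one_right (by linear_combination h3)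
  have hinv2 : (ω ^ 2)⁻¹ = ω := inv_eq_of_mul_eq_one_right (by linear_combination h3)
  have key : ∀ a b,
      (B 2)ᴴ a b = -ω * (B 0 * B 1 + B 1 * B 0) a b ∧
      (B 1)ᴴ a b = -ω * (B 2 * B 0 + B 0 * B 2) a b ∧
      (B 0)ᴴ a b = -ω * (B 1 * B 2 + B 2 * B 1) a b := by
    intro a b
    have e0 := congrFun (congrFun (hrel 0) a) b
    have e1 := congrFun (congrFun (hrel 1) a) b
    have e2 := congrFun (congrFun (hrel 2) a) b
    simp [Fin.sum_univ_three, -conjTranspose_apply, h3, h4, h6, hinv, hinv2] at e0 e1 e2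
    simp only [Matrix.add_apply]
    refine dft_three_inversion hs ?_ ?_ ?_
    · linear_combination e0
    · linear_combination e1
    · linear_combination e2
  have k01 : (B 2)ᴴ = (-ω) • (B 0 * B 1 + B 1 * B 0) := by
    ext a b; exact (key a b).1
  have k20 : (B 1)ᴴ = (-ω) • (B 2 * B 0 + B 0 * B 2) := by
    ext a b; exact (key a b).2.1
  have k12 : (B 0)ᴴ = (-ω) • (B 1 * B 2 + B 2 * B 1) := by
    ext a b; exact (key a b).2.2
  refine ⟨k01, k20, k12, fun k k' hk => ?_⟩
  have u01 := mem_unitaryGroup_of_conjTranspose_eq hnorm (hBU 2) k01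
  have u20 := mem_unitaryGroup_of_conjTranspose_eq hnorm (hBU 1) k20
  have u12 := mem_unitaryGroup_of_conjTranspose_eq hnorm (hBU 0) k12
  fin_cases k <;> fin_cases k' <;> first
    | exact absurd rfl hk
    | assumption
    | (rw [add_comm]; assumption)
end

section
/- Let ω = exp(2πi/3) and λ = (λ_0, λ_1, λ_2) = (1, exp(−iπ/18), exp(iπ/18)). Then the maximum, over all functions a : {0,1,2} → {0,1,2} and b : {0,1,2} → {0,1,2}, of the real number (1/27) ∑_{n=0}^{2} λ_n ∑_{j,k=0}^{2} ω^{n(jk + a(j) + b(k))} equals 1/3 + 2 cos(π/9)/(3√3). (This is the classical/local value of the modified Buhrman–Massar Bell functional for d = 3.) -/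
/-!
The terms `n = 1` and `n = 2` of the functional are complex conjugate, so its value at a strategy
`(a, b)` is `(9 + 2 ∑ cos (2π e / 3 - π / 18)) / 27`, summed over the nine exponents
`e = jk + a j + b k` (`functional_re`). The cosine depends only on `e mod 3`: it equals
`cos (π / 18)` for residue `0`, `-sin (π / 9)` for residue `1`, and is smaller still for residue `2`.

At most six of the nine exponents vanish mod 3 (`card_zero_le`): the mixed second difference of
`jk + a j + b k` over a 2 × 2 subrectangle is `(j - j')(k - k') ≠ 0`, so every such subrectangle has a
nonzero entry, whereas two nonzero entries can be avoided by deleting a row through one and a column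
through the other. Hence the sum is at most `6 cos (π / 18) - 3 sin (π / 9) = 3 √3 cos (π / 9)`.
Equality holds for `a = b = (0, 0, 1)`, which gives six exponents of residue `0` and three of
residue `1`.
-/

/-- The real part of `e^{-iπ/18} ω^e`, the contribution of one input pair with exponent `e`. -/
noncomputable def phase (e : ℕ) : ℝ := Real.cos (2 * Real.pi * e / 3 - Real.pi / 18)

lemma re_first (e : ℕ) :
    (Complex.exp (-(Real.pi * Complex.I) / 18) *
      Complex.exp (2 * Real.pi * Complex.I / 3) ^ e).re = phase e := by
  rw [← Complex.exp_nat_mul, ← Complex.exp_add, phase, ← Complex.exp_ofReal_mul_I_re]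
  congr 2
  push_cast
  ring

/-- The contribution of `n = 2` equals that of `n = 1`, as the two angles add up to `2πe`. -/
lemma re_second (e : ℕ) :
    (Complex.exp (Real.pi * Complex.I / 18) *
      Complex.exp (2 * Real.pi * Complex.I / 3) ^ (2 * e)).re = phase e := by
  rw [← Complex.exp_nat_mul, ← Complex.exp_add, phase, ← Real.cos_nat_mul_two_pi_sub _ e,
    ← Complex.exp_ofReal_mul_I_re]
  congr 2
  push_cast
  ring

lemma functional_re (a b : Fin 3 → Fin 3) :
    ((1 / 27 : ℂ) * ∑ n : Fin 3,
      (![1, Complex.exp (-(Real.pi * Complex.I) / 18),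
        Complex.exp (Real.pi * Complex.I / 18)] : Fin 3 → ℂ) n * ∑ j : Fin 3, ∑ k : Fin 3,
          Complex.exp (2 * Real.pi * Complex.I / 3) ^
            ((n : ℕ) * ((j : ℕ) * (k : ℕ) + ((a j : ℕ)) + ((b k : ℕ))))).re =
      (1 / 27) * (9 + 2 * ∑ j : Fin 3, ∑ k : Fin 3,
        phase ((j : ℕ) * (k : ℕ) + ((a j : ℕ)) + ((b k : ℕ)))) := by
  have h27 : (1 / 27 : ℂ) = ((1 / 27 : ℝ) : ℂ) := by norm_num
  rw [h27, Complex.re_ofReal_mul, Fin.sum_univ_three]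
  congr 1
  simp only [Matrix.cons_val_zero, Matrix.cons_val_one, Matrix.cons_val, Fin.val_zero, Fin.val_one,
    Fin.val_two, zero_mul, one_mul, pow_zero, Finset.mul_sum, Complex.add_re, Complex.re_sum,
    re_first, re_second, Finset.sum_const, Finset.card_univ, Fintype.card_fin]
  simp only [← Finset.mul_sum]
  norm_num
  ring

lemma phase_mod (e : ℕ) : phase e = phase (e % 3) := by
  unfold phase
  rw [← Real.cos_add_nat_mul_two_pi (2 * Real.pi * (e % 3 : ℕ) / 3 - Real.pi / 18) (e / 3)]
  congr 1
  have h : (e : ℝ) = ((e % 3 : ℕ) : ℝ) + 3 * ((e / 3 : ℕ) : ℝ) := by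
    exact_mod_cast (Nat.mod_add_div e 3).symm
  rw [h]
  ring

lemma phase_zero : phase 0 = Real.cos (Real.pi / 18) := by
  simp [phase]

lemma phase_one : phase 1 = -Real.sin (Real.pi / 9) := by
  rw [phase, ← Real.cos_add_pi_div_two]
  congr 1
  push_cast
  ring

lemma phase_two_le : phase 2 ≤ -Real.sin (Real.pi / 9) := by
  have h : phase 2 = -Real.sin (2 * Real.pi / 9) := by
    rw [phase, ← Real.cos_add_pi_div_two, ← Real.cos_two_pi_sub]
    congr 1
    push_cast
    ring
  rw [h, neg_le_neg_iff]
  have := Real.pi_pos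
  apply Real.sin_le_sin_of_le_of_le_pi_div_two <;> linarith

lemma phase_le (e : ℕ) :
    phase e ≤ (if e % 3 = 0 then 1 else 0) * (Real.cos (Real.pi / 18) + Real.sin (Real.pi / 9))
      - Real.sin (Real.pi / 9) := by
  rw [phase_mod]
  have h3 : e % 3 < 3 := Nat.mod_lt _ (by norm_num)
  interval_cases e % 3
  · simp [phase_zero]
  · simp [phase_one]
  · simpa using phase_two_le

/-- At most six of the nine exponents are divisible by 3. -/
lemma card_zero_le (a b : Fin 3 → Fin 3) :
    ∑ j : Fin 3, ∑ k : Fin 3,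
      (if ((j : ℕ) * (k : ℕ) + (a j : ℕ) + (b k : ℕ)) % 3 = 0 then 1 else 0) ≤ 6 := by
  have key : ∀ a₀ a₁ a₂ b₀ b₁ b₂ : Fin 3, ∑ j : Fin 3, ∑ k : Fin 3,
      (if ((j : ℕ) * (k : ℕ) + (![a₀, a₁, a₂] j : ℕ) + (![b₀, b₁, b₂] k : ℕ)) % 3 = 0
        then 1 else 0) ≤ 6 := by
    decide +kernel
  have eta : ∀ f : Fin 3 → Fin 3, ![f 0, f 1, f 2] = f := fun f => by
    funext i
    fin_cases i <;> rfl
  simpa only [eta] using key (a 0) (a 1) (a 2) (b 0) (b 1) (b 2)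

lemma cos_sin_identity :
    2 * Real.cos (Real.pi / 18) - Real.sin (Real.pi / 9) = √3 * Real.cos (Real.pi / 9) := by
  have h : Real.pi / 18 = Real.pi / 6 - Real.pi / 9 := by ring
  rw [h, Real.cos_sub, Real.cos_pi_div_six, Real.sin_pi_div_six]
  ring

lemma value_eq :
    1 / 3 + 2 * Real.cos (Real.pi / 9) / (3 * √3) =
      (1 / 27) * (9 + 2 * (6 * Real.cos (Real.pi / 18) - 3 * Real.sin (Real.pi / 9))) := by
  have h : 6 * Real.cos (Real.pi / 18) - 3 * Real.sin (Real.pi / 9)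
      = 3 * (√3 * Real.cos (Real.pi / 9)) := by
    rw [← cos_sin_identity]
    ring
  have h3 : √3 * √3 = 3 := Real.mul_self_sqrt (by norm_num)
  have hpos : 0 < √3 := by positivity
  rw [h]
  field_simp
  linear_combination (-18 * Real.cos (Real.pi / 9)) * h3

/-- the classical (local) value of the modified Buhrman-Massar
Bell functional for `d = 3`, with the canonical phases
`λ = (1, e^{-iπ/18}, e^{iπ/18})`, equals `1/3 + 2cos(π/9)/(3√3)`: it is the
maximum over all deterministic strategies `a, b : {0,1,2} → {0,1,2}`. -/
theorem classical_value_d3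
    (ω : ℂ) (hω : ω = Complex.exp (2 * Real.pi * Complex.I / 3))
    (lam : Fin 3 → ℂ)
    (hlam : lam = ![1, Complex.exp (-(Real.pi * Complex.I) / 18),
      Complex.exp (Real.pi * Complex.I / 18)]) :
    IsGreatest
      { x : ℝ | ∃ a b : Fin 3 → Fin 3,
          x = ((1 / 27 : ℂ) * ∑ n : Fin 3, lam n * ∑ j : Fin 3, ∑ k : Fin 3,
            ω ^ ((n : ℕ) * ((j : ℕ) * (k : ℕ) + ((a j : ℕ)) + ((b k : ℕ))))).re }
      (1 / 3 + 2 * Real.cos (Real.pi / 9) / (3 * Real.sqrt 3)) := by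
  subst hω hlam
  rw [value_eq]
  constructor
  · refine ⟨![0, 0, 1], ![0, 0, 1], ?_⟩
    rw [functional_re]
    have h3 : phase 3 = phase 0 := phase_mod 3
    have h6 : phase 6 = phase 0 := phase_mod 6
    simp [Fin.sum_univ_three, h3, h6, phase_zero, phase_one]
    ring
  · rintro x ⟨a, b, rfl⟩
    rw [functional_re]
    have hsum := Finset.sum_le_sum fun j (_ : j ∈ (Finset.univ : Finset (Fin 3))) =>
      Finset.sum_le_sum fun k (_ : k ∈ (Finset.univ : Finset (Fin 3))) =>
        phase_le ((j : ℕ) * (k : ℕ) + (a j : ℕ) + (b k : ℕ))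
    simp only [Finset.sum_sub_distrib, ← Finset.sum_mul, Finset.sum_const, Finset.card_univ,
      Fintype.card_fin, nsmul_eq_mul] at hsum
    have hcard : (∑ j : Fin 3, ∑ k : Fin 3,
        (if ((j : ℕ) * (k : ℕ) + (a j : ℕ) + (b k : ℕ)) % 3 = 0 then (1 : ℝ) else 0)) ≤ 6 := by
      exact_mod_cast card_zero_le a b
    have hpi := Real.pi_pos
    have hc : 0 ≤ Real.cos (Real.pi / 18) :=
      Real.cos_nonneg_of_mem_Icc ⟨by linarith, by linarith⟩
    have hs : 0 ≤ Real.sin (Real.pi / 9) :=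
      Real.sin_nonneg_of_nonneg_of_le_pi (by linarith) (by linarith)
    have hmul := mul_le_mul_of_nonneg_right hcard (add_nonneg hc hs)
    push_cast at hsum
    linarith
end

section
/- Let ω = exp(2πi/5) and λ = (λ_0, λ_1, λ_2, λ_3, λ_4) = (1, ω², −ω², −ω³, ω³) (these are the canonical phases for d = 5). Then the maximum, over all functions a : {0,1,2,3,4} → {0,1,2,3,4} and b : {0,1,2,3,4} → {0,1,2,3,4}, of the real number (1/125) ∑_{n=0}^{4} λ_n ∑_{j,k=0}^{4} ω^{n(jk + a(j) + b(k))} equals 9/25 + 8/(25√5). (This is the classical/local value of the modified Buhrman–Massar Bell functional for d = 5.) -/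
/-! Write `s = √5`. Since `ω ^ 5 = 1`, the functional of a strategy `(a, b)` equals
`(1/125) ∑_{j,k} c (jk + a j + b k)`, where the payoff `c r = Re ∑_n λ_n ω ^ (n r)` depends only on
`r mod 5` and takes the values `1, 1 - s, 1, (7 + s)/2, (s - 3)/2` at `r = 0, 1, 2, 3, 4`
(`payoff_eq`, from `cos (2π/5) = (s - 1)/4`).

For a fixed `a` the outputs `b k` can be optimised separately for each `k`, so the maximum is
`(1/125) max_a ∑_k max_t ∑_j c (jk + a j + t)`. This leaves a finite computation over the `5 ^ 5`
functions `a`, carried out exactly in `ℤ[√5]`: the affine image `2 c r + 3 + 2 s` has natural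
coordinates in the basis `1, s`, and comparing two such numbers amounts to comparing squares of
naturals (`leB`). The bound `45 + 8 s` for the double sum becomes `165 + 66 s`
(`tot_le`), and it is attained by `a = (0, 0, 0, 0, 2)`, `b = (3, 2, 3, 4, 0)`.
-/

/-- The rational coordinate of the rescaled payoff `2 c r + 3 + 2 √5`, for `r < 5`. -/
def wx : ℕ → ℕ
  | 3 => 10
  | 4 => 0
  | _ => 5

/-- The `√5`-coordinate of the rescaled payoff `2 c r + 3 + 2 √5`, for `r < 5`. -/
def wy : ℕ → ℕ
  | 0 => 2
  | 1 => 0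
  | 2 => 2
  | _ => 3

/-- The real number `x + y √5` encoded by the pair `(x, y)`. -/
noncomputable def val (p : ℕ × ℕ) : ℝ := p.1 + p.2 * Real.sqrt 5

/-- Decides `val p ≤ val q`. The truncated subtractions are only formed in the direction in which
they are exact. -/
def leB (p q : ℕ × ℕ) : Bool :=
  bif p.1.ble q.1 then
    bif p.2.ble q.2 then true else (5 * (p.2 - q.2) ^ 2).ble ((q.1 - p.1) ^ 2)
  else
    bif p.2.ble q.2 then ((p.1 - q.1) ^ 2).ble (5 * (q.2 - p.2) ^ 2) else false

/-- The larger of two pairs for the order of their values. -/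
def mx (p q : ℕ × ℕ) : ℕ × ℕ := bif leB p q then q else p

/-- The rescaled payoff collected on Bob's input `k` when he outputs `t` and Alice plays
`(a, b, c, d, e)`. -/
def col (a b c d e k t : ℕ) : ℕ × ℕ :=
  (wx ((a + t) % 5) + wx ((k + b + t) % 5) + wx ((2 * k + c + t) % 5) +
      wx ((3 * k + d + t) % 5) + wx ((4 * k + e + t) % 5),
   wy ((a + t) % 5) + wy ((k + b + t) % 5) + wy ((2 * k + c + t) % 5) +
      wy ((3 * k + d + t) % 5) + wy ((4 * k + e + t) % 5))

/-- Bob's best response on input `k`. -/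
def best (a b c d e k : ℕ) : ℕ × ℕ :=
  mx (col a b c d e k 0) (mx (col a b c d e k 1) (mx (col a b c d e k 2)
    (mx (col a b c d e k 3) (col a b c d e k 4))))

/-- The rescaled total payoff of Alice's strategy `(a, b, c, d, e)` against Bob's best response. -/
def tot (a b c d e : ℕ) : ℕ × ℕ :=
  best a b c d e 0 + best a b c d e 1 + best a b c d e 2 + best a b c d e 3 + best a b c d e 4

theorem tot_le : ∀ a b c d e : Fin 5, leB (tot a b c d e) (165, 66) = true := by
  decide +kernel

theorem sqrt5_mul_self : Real.sqrt 5 * Real.sqrt 5 = 5 := Real.mul_self_sqrt (by norm_num)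

theorem leB_iff (p q : ℕ × ℕ) : leB p q = true ↔ val p ≤ val q := by
  obtain ⟨x, y⟩ := p
  obtain ⟨z, w⟩ := q
  have hs := sqrt5_mul_self
  have hs0 : 0 < Real.sqrt 5 := by positivity
  simp only [leB, val]
  by_cases h1 : x ≤ z <;> by_cases h2 : y ≤ w
  · have h1' : (x : ℝ) ≤ z := by exact_mod_cast h1
    have h2' : (y : ℝ) ≤ w := by exact_mod_cast h2
    have : (x : ℝ) + y * Real.sqrt 5 ≤ z + w * Real.sqrt 5 := by gcongr
    simp [h1, h2, this]
  · obtain ⟨u, rfl⟩ := Nat.exists_eq_add_of_le h1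
    obtain ⟨v, rfl⟩ := Nat.exists_eq_add_of_le (le_of_not_ge h2)
    have key : 5 * v ^ 2 ≤ u ^ 2 ↔ (v : ℝ) * Real.sqrt 5 ≤ u := by
      rw [← sq_le_sq₀ (a := (v : ℝ) * Real.sqrt 5) (by positivity) (by positivity), mul_pow, sq (Real.sqrt 5), hs,
        ← Nat.cast_le (α := ℝ)]
      push_cast
      rw [mul_comm]
    have hb1 : x.ble (x + u) = true := by simp
    have hb2 : (w + v).ble w = false := by
      rw [Bool.eq_false_iff]; simpa using h2
    simp only [hb1, hb2, cond_true, cond_false, Nat.add_sub_cancel_left, Nat.ble_eq, key]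
    push_cast
    constructor <;> intro h <;> linarith
  · obtain ⟨u, rfl⟩ := Nat.exists_eq_add_of_le (le_of_not_ge h1)
    obtain ⟨v, rfl⟩ := Nat.exists_eq_add_of_le h2
    have key : u ^ 2 ≤ 5 * v ^ 2 ↔ (u : ℝ) ≤ v * Real.sqrt 5 := by
      rw [← sq_le_sq₀ (a := (u : ℝ)) (by positivity) (by positivity), mul_pow, sq (Real.sqrt 5), hs,
        ← Nat.cast_le (α := ℝ)]
      push_cast
      rw [mul_comm (5 : ℝ)]
    have hb1 : (z + u).ble z = false := by
      rw [Bool.eq_false_iff]; simpa using h1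
    have hb2 : y.ble (y + v) = true := by simp
    simp only [hb1, hb2, cond_true, cond_false, Nat.add_sub_cancel_left, Nat.ble_eq, key]
    push_cast
    constructor <;> intro h <;> linarith
  · have hb1 : x.ble z = false := by
      rw [Bool.eq_false_iff]; simpa using h1
    have hb2 : y.ble w = false := by
      rw [Bool.eq_false_iff]; simpa using h2
    have h1' : (z : ℝ) < x := by exact_mod_cast not_le.mp h1
    have h2' : (w : ℝ) < y := by exact_mod_cast not_le.mp h2
    have : (z : ℝ) + w * Real.sqrt 5 < x + y * Real.sqrt 5 := by gcongr
    simp [hb1, hb2, this]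

theorem val_mx (p q : ℕ × ℕ) : val (mx p q) = max (val p) (val q) := by
  unfold mx
  cases h : leB p q
  · have : ¬ val p ≤ val q := by rw [← leB_iff, h]; simp
    rw [max_eq_left (le_of_not_ge this)]; rfl
  · rw [max_eq_right ((leB_iff p q).mp h)]; rfl

theorem val_add (p q : ℕ × ℕ) : val (p + q) = val p + val q := by
  simp only [val, Prod.fst_add, Prod.snd_add]
  push_cast
  ring

theorem col_le_best (a b c d e k : ℕ) (t : Fin 5) :
    val (col a b c d e k t) ≤ val (best a b c d e k) := by
  simp only [best, val_mx]
  fin_cases t <;> simp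

/-- The payoff `c r`, recovered from its rescaled coordinates. -/
noncomputable def payoff (m : ℕ) : ℝ :=
  ((wx (m % 5) : ℝ) - 3 + ((wy (m % 5) : ℝ) - 2) * Real.sqrt 5) / 2

theorem cos_two_pi_div_five : Real.cos (2 * Real.pi / 5) = (Real.sqrt 5 - 1) / 4 := by
  have h : 2 * Real.pi / 5 = 2 * (Real.pi / 5) := by ring
  rw [h, Real.cos_two_mul, Real.cos_pi_div_five]
  nlinarith [sqrt5_mul_self]

/-- Evaluation of `c m` from the real parts of the powers of `ω`. -/
theorem payoff_eq (ω : ℂ) (hω : ω = Complex.exp (2 * Real.pi * Complex.I / 5)) (m : ℕ) :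
    (∑ n : Fin 5, (![1, ω ^ 2, -(ω ^ 2), -(ω ^ 3), ω ^ 3] : Fin 5 → ℂ) n *
      ω ^ ((n : ℕ) * m)).re = payoff m := by
  have h5 : ω ^ 5 = 1 := by
    rw [hω, ← Complex.exp_nat_mul, ← Complex.exp_two_pi_mul_I]
    congr 1
    push_cast
    ring
  have hs := sqrt5_mul_self
  have harg : (2 * Real.pi * Complex.I / 5 : ℂ) = ((2 * Real.pi / 5 : ℝ) : ℂ) * Complex.I := by
    push_cast; ring
  have hre : ω.re = (Real.sqrt 5 - 1) / 4 := by
    rw [hω, harg, Complex.exp_ofReal_mul_I_re, cos_two_pi_div_five]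
  have hn : ω.re * ω.re + ω.im * ω.im = 1 := by
    rw [hω, harg, Complex.exp_ofReal_mul_I_re, Complex.exp_ofReal_mul_I_im]
    nlinarith [Real.sin_sq_add_cos_sq (2 * Real.pi / 5)]
  have h2 : (ω ^ 2).re = -(1 + Real.sqrt 5) / 4 := by
    rw [sq, Complex.mul_re]
    have : ω.im * ω.im = 1 - ω.re * ω.re := by linarith
    rw [this, hre]
    nlinarith
  -- `ω` lies on the unit circle, so `ω ^ 4` and `ω ^ 3` are the conjugates of `ω` and `ω ^ 2`.
  have hconj : ω * (starRingEnd ℂ) ω = 1 := by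
    rw [Complex.mul_conj, Complex.normSq_apply, hn, Complex.ofReal_one]
  have h4c : ω ^ 4 = (starRingEnd ℂ) ω := by
    linear_combination (-(ω ^ 4)) * hconj + (starRingEnd ℂ) ω * h5
  have h3c : ω ^ 3 = (starRingEnd ℂ) (ω ^ 2) := by
    rw [map_pow, ← h4c]
    linear_combination (-(ω ^ 3)) * h5
  have h4 : (ω ^ 4).re = (Real.sqrt 5 - 1) / 4 := by
    rw [h4c, Complex.conj_re, hre]
  have h3 : (ω ^ 3).re = -(1 + Real.sqrt 5) / 4 := by
    rw [h3c, Complex.conj_re, h2]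
  have hred : ∀ n : ℕ, ω ^ (n * m) = ω ^ (n * (m % 5) % 5) := fun n => by
    rw [pow_eq_pow_mod (n * m) h5, Nat.mul_mod, Nat.mul_mod n (m % 5), Nat.mod_mod]
  simp only [Fin.sum_univ_five, hred, payoff]
  have hm : m % 5 < 5 := Nat.mod_lt _ (by norm_num)
  generalize m % 5 = r at hm
  have e5 : ω ^ 2 * ω ^ 3 = 1 := by rw [← h5]; ring
  have e5' : ω ^ 3 * ω ^ 2 = 1 := by rw [← h5]; ring
  have e21 : ω ^ 2 * ω = ω ^ 3 := by ring
  have e22 : ω ^ 2 * ω ^ 2 = ω ^ 4 := by ring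
  have e24 : ω ^ 2 * ω ^ 4 = ω := by linear_combination ω * h5
  have e31 : ω ^ 3 * ω = ω ^ 4 := by ring
  have e33 : ω ^ 3 * ω ^ 3 = ω := by linear_combination ω * h5
  have e34 : ω ^ 3 * ω ^ 4 = ω ^ 2 := by linear_combination ω ^ 2 * h5
  interval_cases r <;>
    simp [wx, wy, e5, e5', e21, e22, e24, e31, e33, e34, hre, h2, h3, h4,
      -Complex.mul_re] <;> ring

/-- The Bell functional as a sum of payoffs, grouped by the input of Bob. -/
theorem functional_eq (ω : ℂ) (hω : ω = Complex.exp (2 * Real.pi * Complex.I / 5))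
    (a b : Fin 5 → Fin 5) :
    ((1 / 125 : ℂ) * ∑ n : Fin 5, (![1, ω ^ 2, -(ω ^ 2), -(ω ^ 3), ω ^ 3] : Fin 5 → ℂ) n *
      ∑ j : Fin 5, ∑ k : Fin 5,
        ω ^ ((n : ℕ) * ((j : ℕ) * (k : ℕ) + ((a j : ℕ)) + ((b k : ℕ))))).re =
    (1 / 125) * ∑ k : Fin 5, ∑ j : Fin 5, payoff ((j : ℕ) * (k : ℕ) + (a j : ℕ) + (b k : ℕ)) := by
  have h125 : (1 / 125 : ℂ) = ((1 / 125 : ℝ) : ℂ) := by push_cast; rfl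
  rw [h125, Complex.re_ofReal_mul]
  congr 1
  simp only [← payoff_eq ω hω, ← Complex.re_sum]
  congr 1
  simp only [Finset.mul_sum]
  rw [Finset.sum_comm]
  conv_rhs => rw [Finset.sum_comm]
  exact Finset.sum_congr rfl fun j _ => Finset.sum_comm

/-- Undoing the rescaling `c ↦ 2 c + 3 + 2 √5` on a sum of five payoffs. -/
theorem sum_payoff_eq (a : Fin 5 → Fin 5) (k t : ℕ) :
    ∑ j : Fin 5, payoff ((j : ℕ) * k + (a j : ℕ) + t) =
      (val (col (a 0) (a 1) (a 2) (a 3) (a 4) k t) - 15 - 10 * Real.sqrt 5) / 2 := by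
  simp only [Fin.sum_univ_five, payoff, val, col]
  simp
  ring

/-- the classical (local) value of the modified Buhrman-Massar
Bell functional for `d = 5`, with the canonical phases
`λ = (1, ω², −ω², −ω³, ω³)`, equals `9/25 + 8/(25√5)`: it is the maximum over
all deterministic strategies `a, b : {0,…,4} → {0,…,4}`. -/
theorem classical_value_d5
    (ω : ℂ) (hω : ω = Complex.exp (2 * Real.pi * Complex.I / 5))
    (lam : Fin 5 → ℂ)
    (hlam : lam = ![1, ω ^ 2, -(ω ^ 2), -(ω ^ 3), ω ^ 3]) :
    IsGreatest
      { x : ℝ | ∃ a b : Fin 5 → Fin 5,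
          x = ((1 / 125 : ℂ) * ∑ n : Fin 5, lam n * ∑ j : Fin 5, ∑ k : Fin 5,
            ω ^ ((n : ℕ) * ((j : ℕ) * (k : ℕ) + ((a j : ℕ)) + ((b k : ℕ))))).re }
      (9 / 25 + 8 / (25 * Real.sqrt 5)) := by
  subst hlam
  simp only [functional_eq ω hω]
  have hs := sqrt5_mul_self
  have hs0 : 0 < Real.sqrt 5 := by positivity
  have hval : 9 / 25 + 8 / (25 * Real.sqrt 5) = (1 / 125) * (45 + 8 * Real.sqrt 5) := by
    field_simp
    nlinarith
  rw [hval]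
  constructor
  · refine ⟨![0, 0, 0, 0, 2], ![3, 2, 3, 4, 0], ?_⟩
    congr 1
    simp [Fin.sum_univ_five, payoff, wx, wy]
    ring
  · rintro x ⟨a, b, rfl⟩
    gcongr
    simp only [sum_payoff_eq]
    have htot := (leB_iff _ _).mp (tot_le (a 0) (a 1) (a 2) (a 3) (a 4))
    simp only [tot, val_add] at htot
    have hb := fun k : Fin 5 =>
      col_le_best (a 0) (a 1) (a 2) (a 3) (a 4) k (b k)
    have h0 := hb 0
    have h1 := hb 1
    have h2 := hb 2
    have h3 := hb 3
    have h4 := hb 4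
    have hR : val (165, 66) = 165 + 66 * Real.sqrt 5 := by simp [val]
    rw [hR] at htot
    simp only [Fin.sum_univ_five]
    simp at h0 h1 h2 h3 h4 ⊢
    linarith
end
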